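/- arXiv:math/9907213 — 2 statements merged into one kernel-verified Lean document; each statement's English description precedes it below -/
import Mathlib

section
/- Suppose q ≠ 2, or q = 2 and T ∤ M and (T+1) ∤ M. If e_M(Γ) = gcd(e(Γ'/Γ), M) = 1, then Γ^M = Γ ∩ K^M = Γ ∩ k^M, the pairing H_Γ(M) × Γ/Γ^M → Λ_M is nondegenerate, and the induced map φ : Γ/Γ^M → Hom_A(H_Γ(M), Λ_M) is an A-module (equivalently A/(M)-module) isomorphism. -/
open Polynomial IntermediateField

set_option synthInstance.maxHeartbeats 1000000
set_option maxHeartbeats 1000000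

/-- `ψ` is the Carlitz module: the ring homomorphism `A = 𝔽_q[T] → End_{𝔽_q}(k̄, +)`
determined by `T ↦ (α ↦ Tα + α^q)` and `c ↦ (α ↦ cα)` for constants `c ∈ 𝔽_q`. -/
def IsCarlitz {Fq : Type} [Field Fq] [Fintype Fq]
    (ψ : Polynomial Fq →+* AddMonoid.End (AlgebraicClosure (RatFunc Fq))) : Prop :=
  (∀ α, ψ X α = algebraMap (RatFunc Fq) (AlgebraicClosure (RatFunc Fq)) RatFunc.X * α
      + α ^ Fintype.card Fq) ∧
  (∀ (c : Fq) (α), ψ (C c) α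
      = algebraMap (RatFunc Fq) (AlgebraicClosure (RatFunc Fq)) (RatFunc.C c) * α)

/-- An automorphism `τ ∈ Gal(E/k)` fixes the `M`-torsion points `Λ_M` pointwise; when
`E ⊇ K = k(Λ_M)` this says exactly `τ ∈ Gal(E/K)`. -/
def FixesTorsion {Fq : Type} [Field Fq] [Fintype Fq]
    (ψ : Polynomial Fq →+* AddMonoid.End (AlgebraicClosure (RatFunc Fq)))
    (M : Polynomial Fq)
    {E : IntermediateField (RatFunc Fq) (AlgebraicClosure (RatFunc Fq))}
    (τ : ↥E ≃ₐ[RatFunc Fq] ↥E) : Prop :=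
  ∀ x : ↥E, ψ M (x : AlgebraicClosure (RatFunc Fq)) = 0 → τ x = x

/-- An automorphism `s ∈ Gal(E/k)` is an extension of `σ_B ∈ Gal(K/k)`, i.e. it acts on
the `M`-torsion points `Λ_M ⊆ E` by `λ ↦ λ^B`. -/
def ExtendsSigma {Fq : Type} [Field Fq] [Fintype Fq]
    (ψ : Polynomial Fq →+* AddMonoid.End (AlgebraicClosure (RatFunc Fq)))
    (M : Polynomial Fq)
    {E : IntermediateField (RatFunc Fq) (AlgebraicClosure (RatFunc Fq))}
    (s : ↥E ≃ₐ[RatFunc Fq] ↥E) (B : Polynomial Fq) : Prop :=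
  ∀ x : ↥E, ψ M (x : AlgebraicClosure (RatFunc Fq)) = 0 →
    ((s x : AlgebraicClosure (RatFunc Fq))) = ψ B (x : AlgebraicClosure (RatFunc Fq))

/-- `c` is the natural `A`-action on `Gal(E/K)`, defined via decompositions: for
`f ≡ f_1 + ⋯ + f_n (mod M)` with all `gcd(f_i, M) = 1` and extensions `s_i` of
`σ_{f_i}`, one has `c f τ = Σ_i s_i ∘ τ ∘ s_i⁻¹`. -/
def IsDecompConjAction {Fq : Type} [Field Fq] [Fintype Fq]
    (ψ : Polynomial Fq →+* AddMonoid.End (AlgebraicClosure (RatFunc Fq)))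
    (M : Polynomial Fq)
    {E : IntermediateField (RatFunc Fq) (AlgebraicClosure (RatFunc Fq))}
    (c : Polynomial Fq → (↥E ≃ₐ[RatFunc Fq] ↥E) → (↥E ≃ₐ[RatFunc Fq] ↥E)) : Prop :=
  ∀ (f : Polynomial Fq) (τ : ↥E ≃ₐ[RatFunc Fq] ↥E), FixesTorsion ψ M τ →
    ∀ (n : ℕ) (g : Fin n → Polynomial Fq), (∀ i, IsCoprime (g i) M) →
      M ∣ (f - ∑ i, g i) →
      ∀ s : Fin n → (↥E ≃ₐ[RatFunc Fq] ↥E), (∀ i, ExtendsSigma ψ M (s i) (g i)) →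
        c f τ = (List.ofFn (fun i => s i * τ * (s i)⁻¹)).prod

set_option linter.unusedSectionVars false
set_option linter.unusedSimpArgs false

namespace CarlitzAux

section Poly
variable (Fq : Type) [Field Fq] [Fintype Fq]

theorem frob_add {R : Type*} [CommRing R] [Algebra Fq R] (a b : R) (n : ℕ) :
    (a + b) ^ (Fintype.card Fq ^ n) = a ^ (Fintype.card Fq ^ n) + b ^ (Fintype.card Fq ^ n) := by
  have h : ∀ x y : R, (x + y) ^ (Fintype.card Fq) = x ^ (Fintype.card Fq) + y ^ (Fintype.card Fq) :=
    fun x y => map_add (FiniteField.frobeniusAlgHom Fq R) x y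
  induction n with
  | zero => simp
  | succ n ih => simp only [pow_succ, pow_mul] at *; rw [ih, h]

theorem card_cast_zero (R : Type*) [CommRing R] [Algebra Fq R] : (Fintype.card Fq : R) = 0 := by
  rw [← map_natCast (algebraMap Fq R), Nat.cast_card_eq_zero, map_zero]

noncomputable def carlP {R : Type*} [CommRing R] (t : R) : ℕ → R[X]
  | 0 => X
  | n + 1 => (carlP t n).comp (C t * X + X ^ Fintype.card Fq)

noncomputable def carlL {R : Type*} [CommRing R] (t : R) : R[X] →ₗ[R] R[X] :=
  Polynomial.lsum fun i => LinearMap.toSpanSingleton R R[X] (carlP Fq t i)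

variable {R : Type*} [CommRing R] (t : R)

theorem carlL_monomial (i : ℕ) (c : R) : carlL Fq t (monomial i c) = C c * carlP Fq t i := by
  simp [carlL, Polynomial.lsum, smul_eq_C_mul]

theorem carlL_C_mul (c : R) (g : R[X]) : carlL Fq t (C c * g) = C c * carlL Fq t g := by
  rw [← smul_eq_C_mul, map_smul, smul_eq_C_mul]

theorem carlL_mul_X (g : R[X]) :
    carlL Fq t (g * X) = (carlL Fq t g).comp (C t * X + X ^ Fintype.card Fq) := by
  induction g using Polynomial.induction_on' with
  | add p q hp hq => simp only [add_mul, map_add, add_comp, hp, hq]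
  | monomial n a => rw [monomial_mul_X, carlL_monomial, carlL_monomial, carlP]; simp

theorem carlP_map {S : Type*} [CommRing S] (φ : R →+* S) (n : ℕ) :
    (carlP Fq t n).map φ = carlP Fq (φ t) n := by
  induction n with
  | zero => simp [carlP]
  | succ n ih => simp [carlP, Polynomial.map_comp, ih]

theorem carlL_map {S : Type*} [CommRing S] (φ : R →+* S) (g : R[X]) :
    (carlL Fq t g).map φ = carlL Fq (φ t) (g.map φ) := by
  induction g using Polynomial.induction_on' with
  | add p q hp hq => simp only [map_add, Polynomial.map_add, hp, hq]
  | monomial n a => 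
    rw [carlL_monomial, Polynomial.map_monomial, carlL_monomial, Polynomial.map_mul, carlP_map,
      Polynomial.map_C]

theorem carlP_monic [IsDomain R] (n : ℕ) :
    (carlP Fq t n).Monic ∧ (carlP Fq t n).natDegree = Fintype.card Fq ^ n := by
  have hq : 1 < Fintype.card Fq := Fintype.one_lt_card
  have hd : (C t * X + X ^ Fintype.card Fq : R[X]).natDegree = Fintype.card Fq := by
    rw [natDegree_add_eq_right_of_natDegree_lt, natDegree_X_pow]
    rw [natDegree_X_pow]
    exact lt_of_le_of_lt ((natDegree_C_mul_le t X).trans natDegree_X_le) hq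
  have hm : (C t * X + X ^ Fintype.card Fq : R[X]).Monic := by
    rw [add_comm]
    apply monic_X_pow_add
    refine lt_of_le_of_lt (degree_C_mul_X_le t) ?_
    exact_mod_cast hq
  induction n with
  | zero => simp [carlP]
  | succ n ih =>
    rw [carlP]
    exact ⟨ih.1.comp hm (by omega), by rw [natDegree_comp, hd, ih.2, pow_succ]⟩

theorem carlP_derivative [Algebra Fq R] (n : ℕ) : derivative (carlP Fq t n) = C (t ^ n) := by
  induction n with
  | zero => simp [carlP]
  | succ n ih =>
    rw [carlP, derivative_comp, ih]
    simp only [derivative_add, derivative_C_mul, derivative_X, derivative_X_pow, card_cast_zero Fq R,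
      C_comp, pow_succ', C_mul, map_zero, zero_mul, add_zero, mul_one]

theorem carlL_derivative [Algebra Fq R] (g : R[X]) :
    derivative (carlL Fq t g) = C (g.eval t) := by
  induction g using Polynomial.induction_on' with
  | add p q hp hq => simp only [map_add, Polynomial.eval_add, hp, hq]
  | monomial n a => 
    rw [carlL_monomial, derivative_C_mul, carlP_derivative, eval_monomial, C_mul]

theorem carlL_degree [IsDomain R] (g : R[X]) (hg : g ≠ 0) :
    (carlL Fq t g).natDegree = Fintype.card Fq ^ g.natDegree ∧
    (carlL Fq t g).leadingCoeff = g.leadingCoeff := by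
  have hq : 1 < Fintype.card Fq := Fintype.one_lt_card
  induction h : g.natDegree using Nat.strong_induction_on generalizing g with
  | _ n ih =>
    have hl : g.leadingCoeff ≠ 0 := leadingCoeff_ne_zero.2 hg
    have e : g = g.eraseLead + monomial g.natDegree g.leadingCoeff :=
      (eraseLead_add_monomial_natDegree_leadingCoeff g).symm
    have h1 : (C g.leadingCoeff * carlP Fq t n).natDegree = Fintype.card Fq ^ n := by
      rw [natDegree_C_mul hl, (carlP_monic Fq t n).2]
    have h1' : (C g.leadingCoeff * carlP Fq t n).leadingCoeff = g.leadingCoeff := by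
      rw [leadingCoeff_mul, leadingCoeff_C, (carlP_monic Fq t n).1, mul_one]
    have e2 : carlL Fq t g = carlL Fq t g.eraseLead + C g.leadingCoeff * carlP Fq t n := by
      conv_lhs => rw [e]
      rw [map_add, carlL_monomial, h]
    by_cases h0 : g.eraseLead = 0
    · rw [e2, h0, map_zero, zero_add]; exact ⟨h1, h1'⟩
    · have hn : g.eraseLead.natDegree < n := by
        rcases eraseLead_natDegree_lt_or_eraseLead_eq_zero g with h2 | h2
        · omega
        · exact absurd h2 h0
      have h3 := (ih _ hn _ h0 rfl).1
      have h4 : (carlL Fq t g.eraseLead).natDegree < (C g.leadingCoeff * carlP Fq t n).natDegree := by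
        rw [h1, h3]; exact Nat.pow_lt_pow_right hq hn
      rw [e2]
      refine ⟨by rw [natDegree_add_eq_right_of_natDegree_lt h4, h1], ?_⟩
      rw [leadingCoeff_add_of_degree_lt (degree_lt_degree h4), h1']

theorem carlL_prod [Algebra Fq R] (n : ℕ) :
    carlL Fq t (∏ i ∈ Finset.range n, (X - C (t ^ (Fintype.card Fq ^ i)))) =
      X ^ (Fintype.card Fq ^ n) := by
  induction n with
  | zero => 
    simp only [Finset.range_zero, Finset.prod_empty]
    rw [← monomial_zero_one, carlL_monomial]; simp [carlP]
  | succ n ih =>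
    rw [Finset.prod_range_succ, mul_sub, map_sub, carlL_mul_X, mul_comm _ (C _), carlL_C_mul, ih,
      X_pow_comp, frob_add]
    rw [← pow_mul, mul_pow, ← C_pow, pow_succ']; ring

theorem carlL_prime (P : Fq[X]) (hP : P.Monic) [Fact (Irreducible P)] :
    carlL Fq (AdjoinRoot.root P) (P.map (algebraMap Fq (AdjoinRoot P))) =
      X ^ (Fintype.card Fq ^ P.natDegree) := by
  have : Module.Finite Fq (AdjoinRoot P) := hP.finite_adjoinRoot
  have : Finite (AdjoinRoot P) := Module.finite_of_finite Fq
  rw [← carlL_prod]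
  congr 1
  have hfr : Module.finrank Fq (AdjoinRoot P) = P.natDegree := by
    rw [(AdjoinRoot.powerBasis' hP).finrank, AdjoinRoot.powerBasis'_dim]
  have hpow : ∀ (i : ℕ) (x : AdjoinRoot P),
      (FiniteField.frobeniusAlgHom Fq (AdjoinRoot P) ^ i) x = x ^ (Fintype.card Fq ^ i) := by
    intro i x
    induction i with
    | zero => simp
    | succ i ih => rw [pow_succ', AlgHom.mul_apply, ih, pow_succ, pow_mul]; rfl
  have hinj : Set.InjOn (fun i => (AdjoinRoot.root P) ^ (Fintype.card Fq ^ i))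
      (Finset.range P.natDegree) := by
    intro i hi j hj hij
    have h1 : FiniteField.frobeniusAlgHom Fq (AdjoinRoot P) ^ i =
        FiniteField.frobeniusAlgHom Fq (AdjoinRoot P) ^ j := by
      apply AdjoinRoot.algHom_ext
      rw [hpow, hpow]; exact hij
    rw [← hfr, ← FiniteField.orderOf_frobeniusAlgHom] at hi hj
    exact pow_injOn_Iio_orderOf (by simpa using hi) (by simpa using hj) h1
  apply eq_of_monic_of_dvd_of_natDegree_le
  · exact monic_prod_of_monic _ _ fun i _ => monic_X_sub_C _
  · exact hP.map _
  · apply Finset.prod_dvd_of_coprime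
    · intro i hi j hj hij
      exact isCoprime_X_sub_C_of_isUnit_sub (sub_ne_zero.2 fun h => hij (hinj hi hj h)).isUnit
    · intro i _
      rw [dvd_iff_isRoot, IsRoot, eval_map_algebraMap, ← hpow, aeval_algHom_apply, AdjoinRoot.aeval_eq,
        AdjoinRoot.mk_self, map_zero]
  · rw [hP.natDegree_map, natDegree_prod_of_monic _ _ fun i _ => monic_X_sub_C _]
    simp only [natDegree_X_sub_C]; simp

end Poly

section Conj
variable {Fq : Type} [Field Fq] [Fintype Fq]

/-- The Carlitz polynomial of `M`. -/
noncomputable def cp (M : Fq[X]) : Fq[X][X] := carlL Fq (X : Fq[X]) (M.map C)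

theorem cp_degree (M : Fq[X]) (hM : M ≠ 0) :
    (cp M).natDegree = Fintype.card Fq ^ M.natDegree ∧
    (cp M).leadingCoeff = C M.leadingCoeff := by
  have h := carlL_degree Fq (X : Fq[X]) (M.map C)
    ((Polynomial.map_ne_zero_iff C_injective).2 hM)
  rwa [natDegree_map_eq_of_injective C_injective, leadingCoeff_map_of_injective C_injective] at h

theorem cp_derivative (M : Fq[X]) : derivative (cp M) = C M := by
  rw [cp, carlL_derivative]
  congr 1
  rw [eval_map]
  exact eval₂_C_X

theorem cp_map (P M : Fq[X]) : (cp M).map (AdjoinRoot.mk P) =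
    carlL Fq (AdjoinRoot.root P) (M.map (algebraMap Fq (AdjoinRoot P))) := by
  rw [cp, carlL_map, AdjoinRoot.mk_X, Polynomial.map_map]
  rfl

theorem conj_step {Ω : Type*} [Field Ω] [Algebra Fq[X] Ω] [Module.IsTorsionFree Fq[X] Ω]
    (P M : Fq[X]) (hP : P.Monic) (hPi : Irreducible P) (hM0 : M ≠ 0) (hPM : IsCoprime P M) (l : Ω)
    (hl : aeval l (cp M) = 0) (hl2 : aeval (aeval l (cp P)) (cp M) = 0) :
    IsIntegral Fq[X] l ∧ aeval (aeval l (cp P)) (minpoly Fq[X] l) = 0 := by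
  have hlint : IsIntegral Fq[X] l := by
    refine ⟨C (C M.leadingCoeff⁻¹) * cp M, ?_, ?_⟩
    · rw [Monic, leadingCoeff_mul, leadingCoeff_C, (cp_degree M hM0).2, ← C_mul,
        inv_mul_cancel₀ (leadingCoeff_ne_zero.2 hM0), C_1]
    · rw [← aeval_def, map_mul, hl, mul_zero]
  refine ⟨hlint, ?_⟩
  by_contra hne
  obtain ⟨h, hh⟩ := minpoly.isIntegrallyClosed_dvd hlint hl
  have h0 : aeval (aeval l (cp P)) h = 0 := by
    rw [hh, map_mul] at hl2
    exact (mul_eq_zero.1 hl2).resolve_left hne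
  have hdvd : minpoly Fq[X] l ∣ h.comp (cp P) := by
    apply minpoly.isIntegrallyClosed_dvd hlint
    rw [aeval_comp, h0]
  have : Fact (Irreducible P) := ⟨hPi⟩
  have : Module.Finite Fq (AdjoinRoot P) := hP.finite_adjoinRoot
  have : Finite (AdjoinRoot P) := Module.finite_of_finite Fq
  have : Fintype (AdjoinRoot P) := Fintype.ofFinite _
  have hcard : Fintype.card Fq ^ P.natDegree = Fintype.card (AdjoinRoot P) := by
    rw [Module.card_eq_pow_finrank (K := Fq) (V := AdjoinRoot P),
      (AdjoinRoot.powerBasis' hP).finrank, AdjoinRoot.powerBasis'_dim]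
  have hd2 := Polynomial.map_dvd (AdjoinRoot.mk P) hdvd
  rw [Polynomial.map_comp, cp_map, carlL_prime Fq P hP, hcard, ← expand_eq_comp_X_pow,
    FiniteField.expand_card] at hd2
  have hsep : ((cp M).map (AdjoinRoot.mk P)).Separable := by
    rw [Polynomial.Separable, derivative_map, cp_derivative, map_C]
    obtain ⟨u, v, huv⟩ := hPM
    have : AdjoinRoot.mk P v * AdjoinRoot.mk P M = 1 := by
      rw [← map_mul, ← map_one (AdjoinRoot.mk P), ← huv, map_add, map_mul _ u, AdjoinRoot.mk_self]
      simp
    exact ⟨0, C (AdjoinRoot.mk P v), by rw [← C_mul, this]; simp⟩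
  rw [hh, Polynomial.map_mul] at hsep
  have hco := (hsep.isCoprime).pow_right (n := Fintype.card (AdjoinRoot P))
  have hu := hco.isUnit_of_dvd' dvd_rfl hd2
  have hmon := minpoly.monic hlint
  have h1 : (minpoly Fq[X] l).natDegree = 0 := by
    rw [← hmon.natDegree_map (AdjoinRoot.mk P)]
    exact natDegree_eq_zero_of_isUnit hu
  exact (minpoly.natDegree_pos hlint).ne' h1

end Conj

section Dual

theorem dual_card {R : Type*} [CommRing R] [IsDomain R] [IsPrincipalIdealRing R] [Infinite R]
    {L : Type*} [AddCommGroup L] [Module R L]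
    (hL : ∀ f : R, f ≠ 0 → Finite {l : L // f • l = 0} ∧
      Nat.card {l : L // f • l = 0} ≤ Nat.card (R ⧸ Ideal.span {f}))
    (n : ℕ) : ∀ (V : Type*) [AddCommGroup V] [Module R V] [Finite V], Nat.card V = n →
      Finite (V →ₗ[R] L) ∧ Nat.card (V →ₗ[R] L) ≤ Nat.card V := by
  induction n using Nat.strong_induction_on with
  | _ n ih =>
  intro V _ _ _ hn
  rcases subsingleton_or_nontrivial V with hs | hs
  · have : Subsingleton (V →ₗ[R] L) := ⟨fun f g => by
      ext x; rw [Subsingleton.elim x 0, map_zero, map_zero]⟩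
    refine ⟨inferInstance, ?_⟩
    rw [Nat.card_unique, Nat.card_unique]
  obtain ⟨x, hx⟩ := exists_ne (0 : V)
  obtain ⟨f, hf⟩ := (IsPrincipalIdealRing.principal (LinearMap.toSpanSingleton R V x).ker).principal
  have hf0 : f ≠ 0 := by
    rintro rfl
    have : Function.Injective (LinearMap.toSpanSingleton R V x) := by
      rw [← LinearMap.ker_eq_bot, hf]; simp
    exact not_finite_iff_infinite.2 ‹Infinite R› (Finite.of_injective _ this)
  have hfx : f • x = 0 := by
    have : f ∈ (LinearMap.toSpanSingleton R V x).ker := by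
      rw [hf]; exact Submodule.mem_span_singleton_self f
    simpa using this
  set Y := Submodule.span R {x} with hY
  have hYc : Nat.card Y = Nat.card (R ⧸ Ideal.span {f}) := by
    rw [hY, ← LinearMap.range_toSpanSingleton]
    rw [← Nat.card_congr (LinearMap.quotKerEquivRange (LinearMap.toSpanSingleton R V x)).toEquiv]
    rw [hf]
  have hcard : Nat.card V = Nat.card Y * Nat.card (V ⧸ Y) := by
    exact Submodule.card_eq_card_quotient_mul_card Y
  have hfinq : Finite (V ⧸ Y) := Finite.of_surjective _ Y.mkQ_surjective
  have hY1 : 1 < Nat.card Y := by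
    have : Nontrivial Y := ⟨⟨⟨x, Submodule.mem_span_singleton_self x⟩, 0, fun h => hx (by
      simpa using congrArg Subtype.val h)⟩⟩
    exact Finite.one_lt_card
  have hlt : Nat.card (V ⧸ Y) < n := by
    rw [← hn, hcard]
    have : 0 < Nat.card (V ⧸ Y) := Nat.card_pos
    nlinarith
  obtain ⟨hfin, hle⟩ := ih _ hlt (V ⧸ Y) rfl
  obtain ⟨hLf, hLc⟩ := hL f hf0
  let ev : (V →ₗ[R] L) → {l : L // f • l = 0} := fun g => ⟨g x, by rw [← map_smul, hfx, map_zero]⟩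
  let sec : {l : L // f • l = 0} → (V →ₗ[R] L) := Function.invFun ev
  have hsec : ∀ g, ev (sec (ev g)) = ev g := fun g => Function.invFun_eq ⟨g, rfl⟩
  have hsx : ∀ g, sec (ev g) x = g x := fun g => congrArg Subtype.val (hsec g)
  let F : (V →ₗ[R] L) → {l : L // f • l = 0} × ((V ⧸ Y) →ₗ[R] L) := fun g =>
    (ev g, Y.liftQ (g - sec (ev g)) (by
      rw [hY, Submodule.span_singleton_le_iff_mem, LinearMap.mem_ker, LinearMap.sub_apply, hsx,
        sub_self]))
  have hF : Function.Injective F := by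
    intro g g' h
    have h1 : ev g = ev g' := congrArg Prod.fst h
    have h2 := congrArg Prod.snd h
    ext v
    have h3 := LinearMap.congr_fun h2 (Y.mkQ v)
    simp only [F, Submodule.mkQ_apply, Submodule.liftQ_apply, LinearMap.sub_apply, h1] at h3
    exact sub_left_injective h3
  refine ⟨Finite.of_injective F hF, ?_⟩
  calc _ ≤ _ := Nat.card_le_card_of_injective F hF
    _ = _ := Nat.card_prod _ _
    _ ≤ Nat.card Y * Nat.card (V ⧸ Y) := by rw [hYc]; exact Nat.mul_le_mul hLc hle
    _ = _ := hcard.symm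

theorem dual_surj {R : Type*} [CommRing R] [IsDomain R] [IsPrincipalIdealRing R] [Infinite R]
    {L : Type*} [AddCommGroup L] [Module R L]
    (hL : ∀ f : R, f ≠ 0 → Finite {l : L // f • l = 0} ∧
      Nat.card {l : L // f • l = 0} ≤ Nat.card (R ⧸ Ideal.span {f}))
    {G : Type*} [AddCommGroup G] [Module R G] [Module.Finite R G] (m : R)
    [Finite (R ⧸ Ideal.span {m})]
    (N : Submodule R (G →ₗ[R] L))
    (h1 : ∀ φ ∈ N, ∀ a, φ (m • a) = 0)
    (h2 : ∀ a : G, (∀ φ ∈ N, φ a = 0) → ∃ b, m • b = a)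
    (t : N →ₗ[R] L) : ∃ a : G, ∀ φ : N, t φ = (φ : G →ₗ[R] L) a := by
  let Y : Submodule R G := LinearMap.range (LinearMap.lsmul R G m)
  have htor : Module.IsTorsionBySet R (G ⧸ Y) (Ideal.span {m} : Ideal R) := by
    rw [Module.isTorsionBySet_span_singleton_iff]
    intro v
    obtain ⟨v, rfl⟩ := Y.mkQ_surjective v
    rw [← map_smul, Submodule.mkQ_apply, Submodule.Quotient.mk_eq_zero]
    exact ⟨v, rfl⟩
  have hV : Finite (G ⧸ Y) := by
    let _ := htor.module
    have := htor.isScalarTower (S := R)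
    have : Module.Finite (R ⧸ Ideal.span {m}) (G ⧸ Y) :=
      Module.Finite.of_restrictScalars_finite R _ _
    exact Module.finite_of_finite (R ⧸ Ideal.span {m})
  obtain ⟨hVf, hVc⟩ := dual_card hL _ (G ⧸ Y) rfl
  let j : N → ((G ⧸ Y) →ₗ[R] L) := fun φ => Y.liftQ φ (by
    rintro _ ⟨a, rfl⟩
    exact h1 φ φ.2 a)
  have hj : Function.Injective j := by
    intro φ φ' h
    ext a
    have := LinearMap.congr_fun h (Y.mkQ a)
    simpa [j] using this
  have hNf : Finite N := Finite.of_injective j hj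
  obtain ⟨hNf', hNc⟩ := dual_card hL _ N rfl
  let ev0 : G →ₗ[R] (N →ₗ[R] L) := 
    { toFun := fun a => 
        { toFun := fun φ => (φ : G →ₗ[R] L) a
          map_add' := fun _ _ => rfl
          map_smul' := fun _ _ => rfl }
      map_add' := fun a b => by ext φ; simp
      map_smul' := fun r b => by ext φ; simp }
  let ev : (G ⧸ Y) → (N →ₗ[R] L) := Y.liftQ ev0 (by
    rintro _ ⟨a, rfl⟩
    rw [LinearMap.mem_ker]
    ext φ
    exact h1 φ φ.2 a)
  have hev : Function.Injective ev := by
    refine (injective_iff_map_eq_zero (Y.liftQ ev0 _)).2 ?_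
    intro v hv
    obtain ⟨v, rfl⟩ := Y.mkQ_surjective v
    rw [Submodule.mkQ_apply, Submodule.Quotient.mk_eq_zero]
    obtain ⟨b, hb⟩ := h2 v (fun φ hφ => LinearMap.congr_fun hv ⟨φ, hφ⟩)
    exact ⟨b, hb⟩
  have hb := hev.bijective_of_nat_card_le
    ((hNc.trans (Nat.card_le_card_of_injective j hj)).trans hVc)
  obtain ⟨v, hv⟩ := hb.2 t
  obtain ⟨a, rfl⟩ := Y.mkQ_surjective v
  exact ⟨a, fun φ => (LinearMap.congr_fun hv φ).symm⟩

end Dual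

section Units

theorem two_units {R : Type*} [CommRing R] [IsDomain R] [IsPrincipalIdealRing R]
    (M : R) (hM0 : M ≠ 0)
    (H : ∀ P : R, Prime P → P ∣ M → ∀ f : R, ∃ g, ¬ P ∣ g ∧ ¬ P ∣ f - g) (f : R) :
    ∃ g, IsCoprime g M ∧ IsCoprime (f - g) M := by
  induction M using UniqueFactorizationMonoid.induction_on_prime with
  | h₁ => exact absurd rfl hM0
  | h₂ u hu => exact ⟨0, isCoprime_zero_left.2 hu, (isCoprime_one_right.of_isCoprime_of_dvd_right hu.dvd)⟩ 
  | h₃ N P hN hP ih =>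
    obtain ⟨g, hg1, hg2⟩ := ih hN (fun Q hQ hd => H Q hQ (hd.mul_left P))
    by_cases hPN : P ∣ N
    · have key : ∀ z, IsCoprime z N → IsCoprime z (P * N) := fun z hz =>
        (hz.of_isCoprime_of_dvd_right hPN).mul_right hz
      exact ⟨g, key _ hg1, key _ hg2⟩
    · have hco : IsCoprime P N := (Irreducible.coprime_iff_not_dvd hP.irreducible).2 hPN
      obtain ⟨g', h1, h2⟩ := H P hP (dvd_mul_right P N) f
      obtain ⟨u, v, huv⟩ := id hco
      have hcP : ∀ z, ¬ P ∣ z → IsCoprime z P := fun z hz =>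
        ((Irreducible.coprime_iff_not_dvd hP.irreducible).2 hz).symm
      have e1 : u * P * g + v * N * g' = g' + P * (u * (g - g')) := by
        linear_combination g' * huv
      have e2 : u * P * g + v * N * g' = g + N * (v * (g' - g)) := by
        linear_combination g * huv
      refine ⟨u * P * g + v * N * g', IsCoprime.mul_right ?_ ?_, IsCoprime.mul_right ?_ ?_⟩
      · rw [e1]; exact (hcP _ h1).add_mul_left_left _
      · rw [e2]; exact hg1.add_mul_left_left _
      · rw [e1, ← sub_sub, sub_eq_add_neg, ← mul_neg]; exact (hcP _ h2).add_mul_left_left _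
      · rw [e2, ← sub_sub, sub_eq_add_neg, ← mul_neg]; exact hg2.add_mul_left_left _

end Units
section Galois
variable {Fq : Type} [Field Fq] [Fintype Fq]
  {ψ : Polynomial Fq →+* AddMonoid.End (AlgebraicClosure (RatFunc Fq))}

theorem psi_mul (f g : Fq[X]) (a : AlgebraicClosure (RatFunc Fq)) :
    ψ (f * g) a = ψ f (ψ g a) := by
  rw [map_mul]; rfl

theorem psi_add (f g : Fq[X]) (a : AlgebraicClosure (RatFunc Fq)) :
    ψ (f + g) a = ψ f a + ψ g a := by
  rw [map_add]; rfl

theorem psi_aeval (hψ : IsCarlitz ψ) (M : Fq[X]) (a : AlgebraicClosure (RatFunc Fq)) :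
    ψ M a = aeval a (cp M) := by
  have hX : ∀ n, ∀ a, aeval a (carlP Fq (X : Fq[X]) n) = ψ (X ^ n) a := by
    intro n
    induction n with
    | zero => intro a; simp [carlP]
    | succ n ih =>
      intro a
      rw [carlP, aeval_comp, ih, pow_succ, psi_mul, hψ.1 a]
      congr 2
      simp only [map_add, map_mul, map_pow, aeval_X, aeval_C]
      rw [IsScalarTower.algebraMap_apply Fq[X] (RatFunc Fq), RatFunc.algebraMap_X]
  induction M using Polynomial.induction_on' with
  | add p q hp hq => 
    rw [psi_add, hp, hq, cp, cp, cp, Polynomial.map_add, map_add, map_add]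
  | monomial n c =>
    rw [cp, map_monomial, carlL_monomial, map_mul, hX, ← C_mul_X_pow_eq_monomial, psi_mul, hψ.2, aeval_C,
      IsScalarTower.algebraMap_apply Fq[X] (RatFunc Fq), RatFunc.algebraMap_C]

theorem psi_comm (hψ : IsCarlitz ψ) (M : Fq[X]) (a : AlgebraicClosure (RatFunc Fq))
    (σ : AlgebraicClosure (RatFunc Fq) ≃ₐ[RatFunc Fq] AlgebraicClosure (RatFunc Fq)) :
    σ (ψ M a) = ψ M (σ a) := by
  rw [psi_aeval hψ, psi_aeval hψ]
  exact (aeval_algHom_apply (σ.restrictScalars Fq[X]) a (cp M)).symm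

theorem psi_psi (f g : Fq[X]) (a : AlgebraicClosure (RatFunc Fq)) :
    ψ f (ψ g a) = ψ (f * g) a := by
  rw [psi_mul]

theorem psi_swap (f g : Fq[X]) (a : AlgebraicClosure (RatFunc Fq)) :
    ψ f (ψ g a) = ψ g (ψ f a) := by
  rw [psi_psi, mul_comm, ← psi_psi]

theorem psi_congr {M f g : Fq[X]} (h : M ∣ f - g) {a : AlgebraicClosure (RatFunc Fq)}
    (ha : ψ M a = 0) : ψ f a = ψ g a := by
  obtain ⟨u, hu⟩ := h
  have : f = g + u * M := by linear_combination hu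
  rw [this, psi_add, ← psi_psi, ha, map_zero, add_zero]

/-- `cp M - a` over `k` is separable. -/
theorem cp_sep (M : Fq[X]) (hM : M ≠ 0) (a : RatFunc Fq) :
    ((cp M).map (algebraMap Fq[X] (RatFunc Fq)) - C a).Separable := by
  rw [Polynomial.Separable, derivative_sub, derivative_C, sub_zero, derivative_map, cp_derivative,
    map_C]
  have h0 : algebraMap Fq[X] (RatFunc Fq) M ≠ 0 := by
    simpa using hM
  exact ⟨0, C (algebraMap Fq[X] (RatFunc Fq) M)⁻¹, by rw [← C_mul, inv_mul_cancel₀ h0]; simp⟩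

theorem isSep (hψ : IsCarlitz ψ) (M : Fq[X]) (hM : M ≠ 0) (x : AlgebraicClosure (RatFunc Fq))
    (hx : ψ M x ∈ Set.range (algebraMap (RatFunc Fq) (AlgebraicClosure (RatFunc Fq)))) :
    IsSeparable (RatFunc Fq) x := by
  obtain ⟨a, ha⟩ := hx
  refine (cp_sep M hM a).of_dvd (minpoly.dvd _ _ ?_)
  rw [map_sub, aeval_C, ha, aeval_map_algebraMap, psi_aeval hψ, sub_self]

theorem cardA (f : Fq[X]) (hf : f ≠ 0) : Finite (Fq[X] ⧸ Ideal.span {f}) ∧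
    Nat.card (Fq[X] ⧸ Ideal.span {f}) = Fintype.card Fq ^ f.natDegree := by
  have h : Module.Finite Fq (Fq[X] ⧸ Ideal.span {f}) := by
    have := (AdjoinRoot.powerBasis hf).finite
    exact this
  refine ⟨Module.finite_of_finite Fq, ?_⟩
  rw [Module.natCard_eq_pow_finrank (K := Fq), finrank_quotient_span_eq_natDegree,
    Nat.card_eq_fintype_card]

/-- The algebraic closure with the Carlitz module structure. -/
def Car (_ψ : Polynomial Fq →+* AddMonoid.End (AlgebraicClosure (RatFunc Fq))) : Type :=
  AlgebraicClosure (RatFunc Fq)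

noncomputable instance (ψ : Polynomial Fq →+* AddMonoid.End (AlgebraicClosure (RatFunc Fq))) :
    AddCommGroup (Car ψ) := inferInstanceAs (AddCommGroup (AlgebraicClosure (RatFunc Fq)))

noncomputable instance (ψ : Polynomial Fq →+* AddMonoid.End (AlgebraicClosure (RatFunc Fq))) :
    Module Fq[X] (Car ψ) where
  smul f x := ψ f x
  one_smul x := by change ψ 1 x = x; rw [map_one]; rfl
  mul_smul f g x := by change ψ (f * g) x = ψ f (ψ g x); rw [map_mul]; rfl
  smul_zero f := map_zero (ψ f)
  smul_add f x y := map_add (ψ f) x y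
  add_smul f g x := by change ψ (f + g) x = ψ f x + ψ g x; rw [map_add]; rfl
  zero_smul x := by change ψ 0 x = 0; rw [map_zero]; rfl

theorem card_tors (hψ : IsCarlitz ψ) (f : Fq[X]) (hf : f ≠ 0) :
    Finite {l : Car ψ // f • l = 0} ∧
    Nat.card {l : Car ψ // f • l = 0} = Nat.card (Fq[X] ⧸ Ideal.span {f}) := by
  have hs := cp_sep f hf 0
  rw [C_0, sub_zero] at hs
  have e : {l : AlgebraicClosure (RatFunc Fq) | ψ f l = 0} = (((cp f).map (algebraMap Fq[X] (RatFunc Fq))).rootSet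
      (AlgebraicClosure (RatFunc Fq))) := by
    ext l
    rw [Set.mem_ofPred_eq, mem_rootSet, aeval_map_algebraMap, psi_aeval hψ]
    exact ⟨fun h => ⟨hs.ne_zero, h⟩, fun h => h.2⟩
  have e2 := card_rootSet_eq_natDegree hs (IsAlgClosed.splits
    (((cp f).map (algebraMap Fq[X] (RatFunc Fq))).map
      (algebraMap (RatFunc Fq) (AlgebraicClosure (RatFunc Fq)))))
  rw [← Nat.card_eq_fintype_card, natDegree_map_eq_of_injective
    (IsFractionRing.injective Fq[X] (RatFunc Fq)), (cp_degree f hf).1, ← (cardA f hf).2] at e2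
  constructor
  · change Finite {l : AlgebraicClosure (RatFunc Fq) | ψ f l = 0}
    rw [e]; infer_instance
  · rw [← e2]
    change Nat.card {l : AlgebraicClosure (RatFunc Fq) | ψ f l = 0} = _
    rw [e]

theorem cyclic (hψ : IsCarlitz ψ) (M : Fq[X]) (hM : M ≠ 0) :
    ∃ l : AlgebraicClosure (RatFunc Fq), ψ M l = 0 ∧
      ∀ x : AlgebraicClosure (RatFunc Fq), ψ M x = 0 → ∃ g, x = ψ g l := by
  let Λ : Submodule Fq[X] (Car ψ) := Submodule.torsionBy Fq[X] (Car ψ) M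
  have hfin : Finite Λ := (card_tors hψ M hM).1
  obtain ⟨l, hl⟩ := Module.exists_ker_toSpanSingleton_eq_annihilator Fq[X] Λ
  obtain ⟨f, hf⟩ := (IsPrincipalIdealRing.principal (Module.annihilator Fq[X] Λ)).principal
  have hMa : M ∈ Module.annihilator Fq[X] Λ := by
    rw [Module.mem_annihilator]
    intro x
    exact Subtype.ext x.2
  have hf0 : f ≠ 0 := by
    rintro rfl
    rw [hf] at hMa
    exact hM (by simpa using hMa)
  have hfa : ∀ x : Λ, f • x = 0 := by
    rw [← Module.mem_annihilator, hf]; exact Submodule.mem_span_singleton_self f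
  obtain ⟨hfin2, hc2⟩ := card_tors hψ f hf0
  have hle : Nat.card Λ ≤ Nat.card (LinearMap.toSpanSingleton Fq[X] Λ l).range := by
    rw [← Nat.card_congr (LinearMap.quotKerEquivRange (LinearMap.toSpanSingleton Fq[X] Λ l)).toEquiv,
      hl, hf]
    change _ ≤ Nat.card (Fq[X] ⧸ Ideal.span {f})
    rw [← hc2]
    refine Nat.card_le_card_of_injective
      (fun x : Λ => (⟨x.1, congrArg Subtype.val (hfa x)⟩ : {l : Car ψ // f • l = 0})) ?_
    intro x y h
    have h' := congrArg (fun z : {l : Car ψ // f • l = 0} => z.1) h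
    exact Subtype.ext h'
  have hb := (Subtype.val_injective
    (p := fun x => x ∈ (LinearMap.toSpanSingleton Fq[X] Λ l).range)).bijective_of_nat_card_le hle
  refine ⟨l.1, l.2, fun x hx => ?_⟩
  obtain ⟨⟨_, g, hg⟩, hy⟩ := hb.2 (⟨x, hx⟩ : Λ)
  refine ⟨g, ?_⟩
  have := congrArg Subtype.val (hg.trans hy)
  exact this.symm

theorem conj_monic (hψ : IsCarlitz ψ) (M : Fq[X]) (hM : M ≠ 0) (n : ℕ) :
    ∀ B : Fq[X], B.natDegree = n → B.Monic → IsCoprime B M → ∀ l, ψ M l = 0 →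
      minpoly (RatFunc Fq) (ψ B l) = minpoly (RatFunc Fq) l := by
  induction n using Nat.strong_induction_on with
  | _ n ih =>
  intro B hn hB hco l hl
  by_cases hu : IsUnit B
  · rw [hB.eq_one_of_isUnit hu, map_one]; rfl
  obtain ⟨P, hP, hPi, D, rfl⟩ := exists_monic_irreducible_factor B hu
  have hD : D.Monic := hP.of_mul_monic_left hB
  have hlt : D.natDegree < n := by
    rw [← hn, hP.natDegree_mul hD]
    have := hPi.natDegree_pos
    omega
  rw [mul_comm, ← psi_psi, ih _ hlt D rfl hD hco.of_mul_left_right _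
    (by rw [psi_swap, hl, map_zero])]
  have : Module.IsTorsionFree Fq[X] (AlgebraicClosure (RatFunc Fq)) :=
    Module.IsTorsionFree.trans_faithfulSMul Fq[X] (RatFunc Fq) _
  obtain ⟨h1, h2⟩ := conj_step P M hP hPi hM hco.of_mul_left_left l
    (by rw [← psi_aeval hψ, hl])
    (by rw [← psi_aeval hψ, ← psi_aeval hψ, psi_swap, hl, map_zero])
  have hk := minpoly.isIntegrallyClosed_eq_field_fractions' (RatFunc Fq) h1
  symm
  have hlint : IsIntegral (RatFunc Fq) l := h1.tower_top
  rw [minpoly.eq_iff_aeval_eq_zero (minpoly.irreducible hlint) (minpoly.monic hlint), hk,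
    aeval_map_algebraMap, psi_aeval hψ, h2]

theorem exists_sigma (hψ : IsCarlitz ψ) (M : Fq[X]) (hM : 0 < M.natDegree) (B : Fq[X])
    (hB : IsCoprime B M) :
    ∃ σ : AlgebraicClosure (RatFunc Fq) ≃ₐ[RatFunc Fq] AlgebraicClosure (RatFunc Fq),
      ∀ x, ψ M x = 0 → σ x = ψ B x := by
  have hM0 : M ≠ 0 := by rintro rfl; simp at hM
  obtain ⟨l, hl, hgen⟩ := cyclic hψ M hM0
  have hlc : M.leadingCoeff ≠ 0 := leadingCoeff_ne_zero.2 hM0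
  let Q := M * (C M.leadingCoeff⁻¹ * X ^ B.natDegree)
  have hQd : Q.natDegree = M.natDegree + B.natDegree := by
    simp only [Q]
    rw [natDegree_mul hM0, natDegree_C_mul (inv_ne_zero hlc), natDegree_X_pow]
    exact mul_ne_zero (C_ne_zero.2 (inv_ne_zero hlc)) (pow_ne_zero _ X_ne_zero)
  have hQ : Q.Monic := by
    rw [Monic]; simp only [Q, leadingCoeff_mul, leadingCoeff_C, leadingCoeff_X_pow]
    rw [mul_one, mul_inv_cancel₀ hlc]
  have hmon : (B + Q).Monic := by
    rw [add_comm]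
    exact hQ.add_of_left (degree_lt_degree (by omega))
  have hco : IsCoprime (B + Q) M := hB.add_mul_left_left _
  have h := conj_monic hψ M hM0 _ (B + Q) rfl hmon hco l hl
  have h2 : ψ (B + Q) l = ψ B l := psi_congr (M := M) ⟨C M.leadingCoeff⁻¹ * X ^ B.natDegree, by
    simp only [Q]; ring⟩ hl
  rw [h2, Normal.minpoly_eq_iff_mem_orbit] at h
  obtain ⟨σ, hσ⟩ := h
  refine ⟨σ, fun x hx => ?_⟩
  obtain ⟨g, rfl⟩ := hgen x hx
  rw [psi_comm hψ, psi_swap B g]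
  exact congrArg _ hσ

theorem fixed_mem {k Ω : Type*} [Field k] [Field Ω] [Algebra k Ω] [Normal k Ω] (x : Ω)
    (hs : IsSeparable k x) (hf : ∀ σ : Ω ≃ₐ[k] Ω, σ x = x) : x ∈ Set.range (algebraMap k Ω) := by
  have hc := card_rootSet_eq_natDegree (K := Ω) hs (Normal.splits inferInstance x)
  have hsub : Subsingleton ((minpoly k x).rootSet Ω) := by
    have : ∀ y ∈ (minpoly k x).rootSet Ω, y = x := by
      intro y hy
      have hx : IsIntegral k x := Normal.isIntegral inferInstance x
      rw [mem_rootSet] at hy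
      have := (minpoly.eq_iff_aeval_eq_zero (minpoly.irreducible hx) (minpoly.monic hx)).2 hy.2
      rw [eq_comm, Normal.minpoly_eq_iff_mem_orbit] at this
      obtain ⟨σ, rfl⟩ := this
      exact hf σ
    exact ⟨fun a b => Subtype.ext ((this _ a.2).trans (this _ b.2).symm)⟩
  have h1 : (minpoly k x).natDegree ≤ 1 := by
    rw [← hc]; exact Fintype.card_le_one_iff_subsingleton.2 hsub
  have h2 := minpoly.natDegree_pos (Normal.isIntegral (F := k) inferInstance x)
  have h3 := minpoly.natDegree_eq_one_iff.1 (by omega : (minpoly k x).natDegree = 1)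
  exact h3

theorem exists_B (M : Fq[X])
    (hq : ¬ (Fintype.card Fq = 2 ∧ (X ∣ M ∨ X + 1 ∣ M))) :
    ∃ B : Fq[X], IsCoprime B M ∧ IsCoprime (B - 1) M := by
  by_cases h2 : Fintype.card Fq = 2
  · have hX : ¬ X ∣ M := fun h => hq ⟨h2, Or.inl h⟩
    have hX1 : ¬ X + 1 ∣ M := fun h => hq ⟨h2, Or.inr h⟩
    have h20 : (2 : Fq[X]) = 0 := by
      have := card_cast_zero Fq Fq[X]
      rw [h2] at this
      exact_mod_cast this
    have e : (X - 1 : Fq[X]) = X + 1 := by linear_combination -h20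
    have e' : (X - 1 : Fq[X]) = X - C 1 := by simp
    refine ⟨X, (Irreducible.coprime_iff_not_dvd irreducible_X).2 hX, ?_⟩
    rw [← e, e'] at hX1
    rw [e']
    exact (Irreducible.coprime_iff_not_dvd (irreducible_X_sub_C 1)).2 hX1
  · have : 2 < Fintype.card Fq := by
      have : 1 < Fintype.card Fq := Fintype.one_lt_card
      omega
    obtain ⟨c, hc0, hc1⟩ : ∃ c : Fq, c ≠ 0 ∧ c ≠ 1 := by
      classical
      obtain ⟨c, hc⟩ := Finset.exists_mem_notMem_of_card_lt_card
        (s := {0, 1}) (t := (Finset.univ : Finset Fq))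
        (lt_of_le_of_lt Finset.card_le_two this)
      exact ⟨c, by aesop, by aesop⟩
    have hu : ∀ d : Fq, d ≠ 0 → IsCoprime (C d) M := fun d hd => 
      ⟨C d⁻¹, 0, by rw [← C_mul, inv_mul_cancel₀ hd]; simp⟩
    refine ⟨C c, hu c hc0, ?_⟩
    rw [← C_1, ← C_sub]
    exact hu _ (sub_ne_zero.2 hc1)

theorem two_units' (M : Fq[X]) (hM : 0 < M.natDegree)
    (hq : ¬ (Fintype.card Fq = 2 ∧ (X ∣ M ∨ X + 1 ∣ M))) (f : Fq[X]) :
    ∃ g, IsCoprime g M ∧ IsCoprime (f - g) M := by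
  obtain ⟨B, hB, hB1⟩ := exists_B M hq
  refine two_units M (by rintro rfl; simp at hM) ?_ f
  intro P hP hPM f
  have hn : ∀ z, IsCoprime z M → ¬ P ∣ z := fun z hz hd => hP.not_isUnit (hz.isUnit_of_dvd' hd hPM)
  by_cases h1 : P ∣ f - 1
  · refine ⟨B, hn _ hB, fun h => hn _ hB1 ?_⟩
    have := dvd_sub h1 h
    rwa [sub_sub_sub_cancel_left] at this
  · exact ⟨1, hn _ isCoprime_one_left, h1⟩

end Galois
section Main
variable {Fq : Type} [Field Fq] [Fintype Fq]
  {ψ : Polynomial Fq →+* AddMonoid.End (AlgebraicClosure (RatFunc Fq))}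

theorem descend (hψ : IsCarlitz ψ) (M : Fq[X]) (hM : 0 < M.natDegree)
    (hq : ¬ (Fintype.card Fq = 2 ∧ (X ∣ M ∨ X + 1 ∣ M)))
    (b : AlgebraicClosure (RatFunc Fq)) (hb : b ∈ adjoin (RatFunc Fq) {x | ψ M x = 0})
    (hbM : ψ M b ∈ Set.range (algebraMap (RatFunc Fq) (AlgebraicClosure (RatFunc Fq)))) :
    ∃ b' ∈ Set.range (algebraMap (RatFunc Fq) (AlgebraicClosure (RatFunc Fq))),
      ψ M b' = ψ M b := by
  have hM0 : M ≠ 0 := by rintro rfl; simp at hM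
  obtain ⟨B, hB, hB1⟩ := exists_B M hq
  obtain ⟨s, hs⟩ := exists_sigma hψ M hM B hB
  obtain ⟨l, hl, hgen⟩ := cyclic hψ M hM0
  have hfixM : ∀ σ : AlgebraicClosure (RatFunc Fq) ≃ₐ[RatFunc Fq] AlgebraicClosure (RatFunc Fq),
      σ (ψ M b) = ψ M b := by
    obtain ⟨a, ha⟩ := hbM
    intro σ
    rw [← ha, AlgEquiv.commutes]
  have hcomm : ∀ τ : AlgebraicClosure (RatFunc Fq) ≃ₐ[RatFunc Fq] AlgebraicClosure (RatFunc Fq),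
      s (τ b) = τ (s b) := by
    intro τ
    refine IntermediateField.adjoin_induction (RatFunc Fq)
      (p := fun x _ => s (τ x) = τ (s x)) ?_ ?_ ?_ ?_ ?_ hb
    · intro x hx
      have hx' : ψ M x = 0 := hx
      rw [hs x hx', hs (τ x) (by rw [← psi_comm hψ, hx', map_zero]), psi_comm hψ]
    · intro x; simp
    · intro x y _ _ hx hy; simp only [map_add, hx, hy]
    · intro x _ hx; simp only [map_inv₀, hx]
    · intro x y _ _ hx hy; simp only [map_mul, hx, hy]
  obtain ⟨u, v, huv⟩ := hB1
  have hkill : ∀ x, ψ M x = 0 → ψ (u * (B - 1)) x = x := by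
    intro x hx
    have : ψ (u * (B - 1)) x = ψ 1 x := psi_congr (M := M) ⟨-v, by linear_combination huv⟩ hx
    rw [this, map_one]; rfl
  have hBsub : ∀ x, ψ B x = ψ (B - 1) x + x := by
    intro x
    have : ψ ((B - 1) + 1) x = ψ (B - 1) x + ψ 1 x := psi_add _ _ _
    rw [sub_add_cancel, map_one] at this
    exact this
  have hμ : ψ M (s b - b) = 0 := by
    rw [map_sub, ← psi_comm hψ, hfixM, sub_self]
  set b' := b - ψ u (s b - b) with hb'
  have hMb' : ψ M b' = ψ M b := by
    rw [hb', map_sub, psi_swap, hμ, map_zero, sub_zero]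
  have hsb' : s b' = b' := by
    have h1 : s (ψ u (s b - b)) = ψ u (s b - b) + (s b - b) := by
      rw [psi_comm hψ, hs _ hμ, psi_swap, hBsub, psi_psi, mul_comm, hkill _ hμ, add_comm]
    rw [hb', map_sub, h1]; ring
  have hcomm' : ∀ τ : AlgebraicClosure (RatFunc Fq) ≃ₐ[RatFunc Fq] AlgebraicClosure (RatFunc Fq),
      s (τ b') = τ b' := by
    intro τ
    have hτμ : ψ M (τ (s b - b)) = 0 := by rw [← psi_comm hψ, hμ, map_zero]
    have h1 : s (τ (s b - b)) = τ (s (s b - b)) := by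
      rw [hs _ hτμ, hs _ hμ, psi_comm hψ]
    have h5 : s (τ (ψ u (s b - b))) = τ (s (ψ u (s b - b))) := by
      rw [psi_comm hψ u _ τ, psi_comm hψ u _ s, h1, psi_comm hψ u _ s, psi_comm hψ u _ τ]
    have h6 : s (τ b') = τ (s b') := by
      rw [hb', map_sub τ, map_sub s, map_sub s, map_sub τ, hcomm, h5]
    rw [h6, hsb']
  refine ⟨b', fixed_mem b' (isSep hψ M hM0 b' (by rw [hMb']; exact hbM)) ?_, hMb'⟩
  intro τ
  have hν : ψ M (τ b' - b') = 0 := by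
    rw [map_sub, ← psi_comm hψ, hMb', hfixM, sub_self]
  have h2 : s (τ b' - b') = τ b' - b' := by rw [map_sub, hcomm', hsb']
  rw [hs _ hν, hBsub, add_eq_right] at h2
  have h3 := hkill _ hν
  rw [← psi_psi, h2, map_zero] at h3
  exact (sub_eq_zero.1 h3.symm)

/-- The identity map from `Car ψ` to the algebraic closure. -/
def toK (x : Car ψ) : AlgebraicClosure (RatFunc Fq) := x

theorem toK_add (x y : Car ψ) : toK (x + y) = toK x + toK y := rfl
theorem toK_zero : toK (0 : Car ψ) = 0 := rfl
theorem toK_smul (f : Fq[X]) (x : Car ψ) : toK (f • x) = ψ f (toK x) := rfl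
theorem toK_inj {x y : Car ψ} (h : toK x = toK y) : x = y := h

theorem exists_root (hψ : IsCarlitz ψ) (M : Fq[X]) (hM0 : M ≠ 0)
    (a : AlgebraicClosure (RatFunc Fq))
    (ha : a ∈ Set.range (algebraMap (RatFunc Fq) (AlgebraicClosure (RatFunc Fq)))) :
    ∃ α, ψ M α = a := by
  obtain ⟨a', ha'⟩ := ha
  have hd : 0 < (cp M).natDegree := by rw [(cp_degree M hM0).1]; exact pow_pos Fintype.card_pos _
  have hd' : 0 < ((cp M).map (algebraMap Fq[X] (RatFunc Fq))).degree := by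
    refine natDegree_pos_iff_degree_pos.1 ?_
    rwa [natDegree_map_eq_of_injective (IsFractionRing.injective Fq[X] (RatFunc Fq))]
  obtain ⟨α, hα⟩ := IsAlgClosed.exists_aeval_eq_zero (AlgebraicClosure (RatFunc Fq))
    ((cp M).map (algebraMap Fq[X] (RatFunc Fq)) - C a') (by
      rw [degree_sub_C hd']; exact hd'.ne')
  refine ⟨α, ?_⟩
  rwa [map_sub, aeval_C, ha', aeval_map_algebraMap, ← psi_aeval hψ, sub_eq_zero] at hα

end Main
end CarlitzAux

open CarlitzAux

/-- **Corollary 2.10.**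
Suppose `q ≠ 2`, or `q = 2` and `T ∤ M` and `(T+1) ∤ M`.  If
`e_M(Γ) = gcd(e(Γ'/Γ), M) = 1`, then `Γ^M = Γ ∩ K^M = Γ ∩ k^M`, the pairing
`H_Γ(M) × Γ/Γ^M → Λ_M`, `(σ, a) ↦ ⟨σ, a⟩ = σα - α` (`α^M = a`) is nondegenerate, and
the induced map `φ : Γ/Γ^M → Hom_A(H_Γ(M), Λ_M)` is an `A`-module (equivalently
`A/(M)`-module) isomorphism. -/
theorem carlitz_kummer_pairing_nondegenerate
    {Fq : Type} [Field Fq] [Fintype Fq]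
    (ψ : Polynomial Fq →+* AddMonoid.End (AlgebraicClosure (RatFunc Fq)))
    (hψ : IsCarlitz ψ)
    (M : Polynomial Fq) (hM : 0 < M.natDegree)
    (hq : ¬ (Fintype.card Fq = 2 ∧ (X ∣ M ∨ X + 1 ∣ M)))
    -- Γ : a finitely generated A-submodule of (k, +)
    (Γ : AddSubgroup (AlgebraicClosure (RatFunc Fq)))
    (hΓk : ∀ x ∈ Γ, x ∈ Set.range (algebraMap (RatFunc Fq) (AlgebraicClosure (RatFunc Fq))))
    (hΓA : ∀ (f : Polynomial Fq), ∀ x ∈ Γ, ψ f x ∈ Γ)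
    (hΓfg : ∃ (n : ℕ) (a : Fin n → AlgebraicClosure (RatFunc Fq)), (∀ i, a i ∈ Γ) ∧
      ∀ x ∈ Γ, ∃ g : Fin n → Polynomial Fq, x = ∑ i, ψ (g i) (a i))
    -- K = k(Λ_M) and k_{M,Γ} = k(Λ_M, (1/M)Γ)
    (K : IntermediateField (RatFunc Fq) (AlgebraicClosure (RatFunc Fq)))
    (hK : K = adjoin (RatFunc Fq) {x | ψ M x = 0})
    (E : IntermediateField (RatFunc Fq) (AlgebraicClosure (RatFunc Fq)))
    (hE : E = adjoin (RatFunc Fq) {x | ψ M x ∈ Γ})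
    -- e = e(Γ'/Γ) : the exponent of Γ' = (1/M)Γ ∩ k over Γ
    (e : Polynomial Fq) (he : e.Monic)
    (heΓ : ∀ x : AlgebraicClosure (RatFunc Fq),
      x ∈ Set.range (algebraMap (RatFunc Fq) (AlgebraicClosure (RatFunc Fq))) →
      ψ M x ∈ Γ → ψ e x ∈ Γ)
    (hemin : ∀ e' : Polynomial Fq, e'.Monic →
      (∀ x : AlgebraicClosure (RatFunc Fq),
        x ∈ Set.range (algebraMap (RatFunc Fq) (AlgebraicClosure (RatFunc Fq))) →
        ψ M x ∈ Γ → ψ e' x ∈ Γ) →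
      e.degree ≤ e'.degree)
    -- e_M(Γ) = gcd(e(Γ'/Γ), M) = 1
    (hcop : IsCoprime e M)
    -- the natural A-module structure on H_Γ(M) = Gal(k_{M,Γ}/K)
    (c : Polynomial Fq → (↥E ≃ₐ[RatFunc Fq] ↥E) → (↥E ≃ₐ[RatFunc Fq] ↥E))
    (hc : IsDecompConjAction ψ M c)
    (hcH : ∀ f τ, FixesTorsion ψ M τ → FixesTorsion ψ M (c f τ)) :
    -- (1) Γ^M = Γ ∩ K^M = Γ ∩ k^M
    (∀ a ∈ Γ,
      ((∃ γ ∈ Γ, ψ M γ = a) ↔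
        (∃ β : AlgebraicClosure (RatFunc Fq), β ∈ K ∧ ψ M β = a)) ∧
      ((∃ γ ∈ Γ, ψ M γ = a) ↔
        (∃ β ∈ Set.range (algebraMap (RatFunc Fq) (AlgebraicClosure (RatFunc Fq))),
          ψ M β = a))) ∧
    -- (2) the pairing H_Γ(M) × Γ/Γ^M → Λ_M is nondegenerate:
    --   left kernel trivial
    (∀ σ : ↥E ≃ₐ[RatFunc Fq] ↥E, FixesTorsion ψ M σ →
      (∀ a ∈ Γ, ∀ α : ↥E, ψ M (α : AlgebraicClosure (RatFunc Fq)) = a → σ α = α) →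
      σ = 1) ∧
    --   right kernel is Γ^M
    (∀ a ∈ Γ,
      (∀ σ : ↥E ≃ₐ[RatFunc Fq] ↥E, FixesTorsion ψ M σ →
        ∀ α : ↥E, ψ M (α : AlgebraicClosure (RatFunc Fq)) = a → σ α = α) →
      ∃ γ ∈ Γ, ψ M γ = a) ∧
    -- (3) φ : Γ/Γ^M → Hom_A(H_Γ(M), Λ_M) is surjective (together with (2) it is an
    -- A-module isomorphism): every A-homomorphism t : H_Γ(M) → Λ_M equals φ_a for
    -- some a ∈ Γ
    (∀ t : (↥E ≃ₐ[RatFunc Fq] ↥E) → AlgebraicClosure (RatFunc Fq),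
      (∀ σ, FixesTorsion ψ M σ → ψ M (t σ) = 0) →
      (∀ σ τ, FixesTorsion ψ M σ → FixesTorsion ψ M τ → t (σ * τ) = t σ + t τ) →
      (∀ f σ, FixesTorsion ψ M σ → t (c f σ) = ψ f (t σ)) →
      ∃ a ∈ Γ, ∀ σ, FixesTorsion ψ M σ →
        ∀ α : ↥E, ψ M (α : AlgebraicClosure (RatFunc Fq)) = a →
          t σ = (σ α : AlgebraicClosure (RatFunc Fq))
              - (α : AlgebraicClosure (RatFunc Fq))) := by
  have hM0 : M ≠ 0 := by rintro rfl; simp at hM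
  -- Γ ∩ k^M = Γ^M
  have hk : ∀ b ∈ Set.range (algebraMap (RatFunc Fq) (AlgebraicClosure (RatFunc Fq))),
      ψ M b ∈ Γ → b ∈ Γ := by
    intro b hb hbM
    obtain ⟨u, v, huv⟩ := hcop
    have h1 : ψ (u * e + v * M) b = ψ u (ψ e b) + ψ v (ψ M b) := by
      rw [psi_add, psi_mul, psi_mul]
    have h2 : ψ (u * e + v * M) b = b := by rw [huv, map_one]; rfl
    rw [← h2, h1]
    exact Γ.add_mem (hΓA _ _ (heΓ b hb hbM)) (hΓA _ _ hbM)
  have hKk : ∀ b ∈ K, ψ M b ∈ Γ → ∃ γ ∈ Γ, ψ M γ = ψ M b := by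
    intro b hb hbM
    rw [hK] at hb
    obtain ⟨b', hb', h⟩ := descend hψ M hM hq b hb (hΓk _ hbM)
    exact ⟨b', hk b' hb' (by rw [h]; exact hbM), h⟩
  have hkK : ∀ b ∈ Set.range (algebraMap (RatFunc Fq) (AlgebraicClosure (RatFunc Fq))), b ∈ K := by
    rintro _ ⟨b, rfl⟩; exact K.algebraMap_mem b
  have hSE : ∀ x, ψ M x ∈ Γ → x ∈ E := by
    intro x hx
    rw [hE]; exact subset_adjoin _ _ hx
  have hTE : ∀ x, ψ M x = 0 → x ∈ E := fun x hx => hSE x (by rw [hx]; exact Γ.zero_mem)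
  have hσΓ : ∀ (σ : AlgebraicClosure (RatFunc Fq) ≃ₐ[RatFunc Fq] AlgebraicClosure (RatFunc Fq)),
      ∀ x ∈ Γ, σ x = x := by
    intro σ x hx
    obtain ⟨a, rfl⟩ := hΓk x hx
    exact σ.commutes a
  have hnorm : Normal (RatFunc Fq) E := by
    rw [normal_iff_forall_map_le']
    intro σ
    conv_lhs => rw [hE]
    rw [adjoin_map, adjoin_le_iff]
    rintro _ ⟨x, hx, rfl⟩
    have hx' : ψ M x ∈ Γ := hx
    apply hSE
    change ψ M (σ x) ∈ Γ
    rw [← psi_comm hψ, hσΓ σ _ hx']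
    exact hx'
  -- lifts of automorphisms
  have hlift : ∀ τ : ↥E ≃ₐ[RatFunc Fq] ↥E, ∃ σ : AlgebraicClosure (RatFunc Fq) ≃ₐ[RatFunc Fq]
      AlgebraicClosure (RatFunc Fq), ∀ x : E, ((τ x : E) : AlgebraicClosure (RatFunc Fq)) = σ x :=
    fun τ => ⟨τ.liftNormal _, fun x => (τ.liftNormal_commutes _ x).symm⟩
  have hrestr : ∀ σ : AlgebraicClosure (RatFunc Fq) ≃ₐ[RatFunc Fq] AlgebraicClosure (RatFunc Fq),
      ∃ τ : ↥E ≃ₐ[RatFunc Fq] ↥E, ∀ x : E, ((τ x : E) : AlgebraicClosure (RatFunc Fq)) = σ x :=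
    fun σ => ⟨σ.restrictNormal E, fun x => σ.restrictNormal_commutes E x⟩
  have hext : ∀ B, IsCoprime B M → ∃ s : ↥E ≃ₐ[RatFunc Fq] ↥E, ExtendsSigma ψ M s B := by
    intro B hB
    obtain ⟨σ, hσ⟩ := exists_sigma hψ M hM B hB
    obtain ⟨s, hs⟩ := hrestr σ
    exact ⟨s, fun x hx => by rw [hs, hσ _ hx]⟩
  -- left kernel
  have hleft : ∀ σ : ↥E ≃ₐ[RatFunc Fq] ↥E,
      (∀ a ∈ Γ, ∀ α : ↥E, ψ M (α : AlgebraicClosure (RatFunc Fq)) = a → σ α = α) → σ = 1 := by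
    intro σ h
    obtain ⟨σ', hσ'⟩ := hlift σ
    have key : ∀ x ∈ adjoin (RatFunc Fq) {x | ψ M x ∈ Γ}, σ' x = x := by
      intro x hx
      refine IntermediateField.adjoin_induction (RatFunc Fq)
        (p := fun x _ => σ' x = x) ?_ ?_ ?_ ?_ ?_ hx
      · intro x hx
        have := h _ hx ⟨x, hSE x hx⟩ rfl
        rw [← hσ' ⟨x, hSE x hx⟩, this]
      · intro x; simp
      · intro x y _ _ hx hy; simp only [map_add, hx, hy]
      · intro x _ hx; simp only [map_inv₀, hx]
      · intro x y _ _ hx hy; simp only [map_mul, hx, hy]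
    ext x
    rw [hσ', key x (by rw [← hE]; exact x.2)]; rfl
  -- right kernel
  have hright : ∀ a ∈ Γ,
      (∀ σ : ↥E ≃ₐ[RatFunc Fq] ↥E, FixesTorsion ψ M σ →
        ∀ α : ↥E, ψ M (α : AlgebraicClosure (RatFunc Fq)) = a → σ α = α) →
      ∃ γ ∈ Γ, ψ M γ = a := by
    intro a ha h
    obtain ⟨α, hα⟩ := exists_root hψ M hM0 a (hΓk a ha)
    have hαΓ : ψ M α ∈ Γ := by rw [hα]; exact ha
    have hαK : α ∈ K := by
      have hs : IsSeparable K α := (isSep hψ M hM0 α (hΓk _ hαΓ)).tower_top K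
      obtain ⟨z, hz⟩ := fixed_mem (k := K) α hs (by
        intro σ
        obtain ⟨τ, hτ⟩ := hrestr (σ.restrictScalars (RatFunc Fq))
        have h1 := h τ (by
          intro x hx
          apply Subtype.ext
          rw [hτ]
          have hxK : (x : AlgebraicClosure (RatFunc Fq)) ∈ K := by
            rw [hK]; exact subset_adjoin _ _ hx
          exact σ.commutes ⟨_, hxK⟩) ⟨α, hSE α hαΓ⟩ hα
        have h2 := hτ ⟨α, hSE α hαΓ⟩
        rw [h1] at h2
        exact h2.symm)
      rw [← hz]; exact z.2
    obtain ⟨γ, hγ, h3⟩ := hKk α hαK hαΓ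
    exact ⟨γ, hγ, h3.trans hα⟩
  refine ⟨?_, fun σ _ h => hleft σ h, hright, ?_⟩
  · intro a ha
    refine ⟨⟨?_, ?_⟩, ⟨?_, ?_⟩⟩
    · rintro ⟨γ, hγ, h⟩; exact ⟨γ, hkK _ (hΓk γ hγ), h⟩
    · rintro ⟨b, hb, rfl⟩; exact hKk b hb ha
    · rintro ⟨γ, hγ, h⟩; exact ⟨γ, hΓk γ hγ, h⟩
    · rintro ⟨b, hb, rfl⟩; exact ⟨b, hk b hb ha, rfl⟩
  intro t _ ht2 ht3
  -- the A-module Γ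
  let G : Submodule Fq[X] (Car ψ) :=
    { carrier := {x | toK x ∈ Γ}
      add_mem' := fun {x y} hx hy => Γ.add_mem hx hy
      zero_mem' := Γ.zero_mem
      smul_mem' := fun f x hx => hΓA f _ hx }
  have hGfin : Module.Finite Fq[X] G := by
    obtain ⟨n, a, ha, hgen⟩ := hΓfg
    let a' : Fin n → Car ψ := a
    have hG : G = Submodule.span Fq[X] (Set.range a') := by
      apply le_antisymm
      · intro x hx
        obtain ⟨g, hg⟩ := hgen _ hx
        have hg' : x = ∑ i, g i • a' i := hg
        rw [hg']
        exact Submodule.sum_mem _ fun i _ => Submodule.smul_mem _ _ (Submodule.subset_span ⟨i, rfl⟩)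
      · rw [Submodule.span_le]
        rintro _ ⟨i, rfl⟩
        exact ha i
    rw [Module.Finite.iff_fg, hG]
    exact Submodule.fg_span (Set.finite_range _)
  have hroot : ∀ a : G, ∃ α : E, ψ M (α : AlgebraicClosure (RatFunc Fq)) = toK a.1 := by
    intro a
    obtain ⟨α, hα⟩ := exists_root hψ M hM0 (toK a.1) (hΓk _ a.2)
    exact ⟨⟨α, hSE α (by rw [hα]; exact a.2)⟩, hα⟩
  have hautroot : ∀ (τ : ↥E ≃ₐ[RatFunc Fq] ↥E) (a : G) (α : E),
      ψ M (α : AlgebraicClosure (RatFunc Fq)) = toK a.1 →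
      ψ M (τ α : AlgebraicClosure (RatFunc Fq)) = toK a.1 := by
    intro τ a α hα
    obtain ⟨σ, hσ⟩ := hlift τ
    rw [hσ, ← psi_comm hψ, hα]
    exact hσΓ σ _ a.2
  have hauttor : ∀ (τ : ↥E ≃ₐ[RatFunc Fq] ↥E) (α : E),
      ψ M (α : AlgebraicClosure (RatFunc Fq)) = 0 →
      ψ M (τ α : AlgebraicClosure (RatFunc Fq)) = 0 := by
    intro τ α hα
    obtain ⟨σ, hσ⟩ := hlift τ
    rw [hσ, ← psi_comm hψ, hα, map_zero]
  let Rep : (↥E ≃ₐ[RatFunc Fq] ↥E) → (G →ₗ[Fq[X]] Car ψ) → Prop := fun σ φ =>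
    ∀ (a : G) (α : E), ψ M (α : AlgebraicClosure (RatFunc Fq)) = toK a.1 →
      toK (φ a) = (σ α : AlgebraicClosure (RatFunc Fq)) - (α : AlgebraicClosure (RatFunc Fq))
  have hRepEx : ∀ σ, FixesTorsion ψ M σ → ∃ φ, Rep σ φ := by
    intro σ hσ
    obtain ⟨σ', hσ'⟩ := hlift σ
    choose rt hrt using hroot
    have hind : ∀ x y : AlgebraicClosure (RatFunc Fq), ψ M x = ψ M y →
        σ' x - x = σ' y - y := by
      intro x y hxy
      have h0 : ψ M (x - y) = 0 := by rw [map_sub, hxy, sub_self]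
      have h1 := hσ ⟨x - y, hTE _ h0⟩ h0
      have h2 := hσ' ⟨x - y, hTE _ h0⟩
      rw [h1] at h2
      change x - y = σ' (x - y) at h2
      rw [map_sub] at h2
      linear_combination -h2
    let φ : G →ₗ[Fq[X]] Car ψ :=
      { toFun := fun a => (σ' (rt a) - (rt a : AlgebraicClosure (RatFunc Fq)) :
          AlgebraicClosure (RatFunc Fq))
        map_add' := by
          intro a b
          have := hind (rt (a + b)) (rt a + rt b) (by
            rw [map_add, hrt, hrt, hrt]; rfl)
          change σ' (rt (a + b)) - (rt (a + b) : AlgebraicClosure (RatFunc Fq)) =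
            (σ' (rt a) - (rt a : AlgebraicClosure (RatFunc Fq))) +
            (σ' (rt b) - (rt b : AlgebraicClosure (RatFunc Fq)))
          rw [this, map_add]; ring
        map_smul' := by
          intro f a
          have := hind (rt (f • a)) (ψ f (rt a)) (by
            rw [psi_swap, hrt, hrt]; rfl)
          change σ' (rt (f • a)) - (rt (f • a) : AlgebraicClosure (RatFunc Fq)) =
            ψ f (σ' (rt a) - (rt a : AlgebraicClosure (RatFunc Fq)))
          rw [this, map_sub, psi_comm hψ] }
    refine ⟨φ, fun a α hα => ?_⟩
    change σ' (rt a) - (rt a : AlgebraicClosure (RatFunc Fq)) = _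
    rw [hσ']
    exact hind _ _ (by rw [hrt, hα])
  have hRepMul : ∀ σ τ φ χ, Rep σ φ → Rep τ χ → Rep (σ * τ) (φ + χ) := by
    intro σ τ φ χ h1 h2 a α hα
    rw [LinearMap.add_apply, toK_add, h1 a (τ α) (hautroot τ a α hα), h2 a α hα, AlgEquiv.mul_apply]
    ring
  have hRepTor : ∀ τ φ, Rep τ φ → ∀ a, ψ M (toK (φ a)) = 0 := by
    intro τ φ h a
    obtain ⟨α, hα⟩ := hroot a
    rw [h a α hα, map_sub, hautroot τ a α hα, hα, sub_self]
  have hRepConj : ∀ s B τ φ, ExtendsSigma ψ M s B → Rep τ φ → Rep (s * τ * s⁻¹) (B • φ) := by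
    intro s B τ φ hs h a α hα
    have h1 := h a (s⁻¹ α) (hautroot s⁻¹ a α hα)
    have h0 := hRepTor τ φ h a
    have h2 := hs ⟨toK (φ a), hTE _ h0⟩ h0
    have h3 : τ (s⁻¹ α) = s⁻¹ α + ⟨toK (φ a), hTE _ h0⟩ := by
      apply Subtype.ext
      change (τ (s⁻¹ α) : AlgebraicClosure (RatFunc Fq)) = (s⁻¹ α : E) + toK (φ a)
      rw [h1]; ring
    have h4 : s (s⁻¹ α) = α := by
      rw [← AlgEquiv.mul_apply, mul_inv_cancel]; rfl
    rw [LinearMap.smul_apply, toK_smul, AlgEquiv.mul_apply, AlgEquiv.mul_apply, h3, map_add, h4]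
    change _ = (α + (s ⟨toK (φ a), hTE _ h0⟩ : E) : AlgebraicClosure (RatFunc Fq)) - α
    rw [h2]; ring
  have hRepC : ∀ f τ φ, FixesTorsion ψ M τ → Rep τ φ → Rep (c f τ) (f • φ) := by
    intro f τ φ hτ h
    obtain ⟨g, hg1, hg2⟩ := two_units' M hM hq f
    obtain ⟨s1, hs1⟩ := hext g hg1
    obtain ⟨s2, hs2⟩ := hext (f - g) hg2
    have hcc := hc f τ hτ 2 ![g, f - g] (by
      intro i; fin_cases i
      · exact hg1
      · exact hg2) (by simp) ![s1, s2] (by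
      intro i; fin_cases i
      · exact hs1
      · exact hs2)
    have hcc' : c f τ = (s1 * τ * s1⁻¹) * (s2 * τ * s2⁻¹) := by
      rw [hcc]; simp [List.ofFn_succ]
    have hf : f • φ = g • φ + (f - g) • φ := by rw [← add_smul]; congr 1; ring
    rw [hcc', hf]
    exact hRepMul _ _ _ _ (hRepConj _ _ _ _ hs1 h) (hRepConj _ _ _ _ hs2 h)
  have hRepInj : ∀ σ τ φ, Rep σ φ → Rep τ φ → σ = τ := by
    intro σ τ φ h1 h2
    have : τ⁻¹ * σ = 1 := by
      apply hleft
      intro a ha α hα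
      have e1 := h1 ⟨a, ha⟩ α hα
      have e2 := h2 ⟨a, ha⟩ α hα
      have e3 : σ α = τ α := by
        apply Subtype.ext
        linear_combination e2 - e1
      rw [AlgEquiv.mul_apply, e3, ← AlgEquiv.mul_apply, inv_mul_cancel]; rfl
    exact (inv_mul_eq_one.1 this).symm
  have hFmul : ∀ σ τ : ↥E ≃ₐ[RatFunc Fq] ↥E, FixesTorsion ψ M σ → FixesTorsion ψ M τ →
      FixesTorsion ψ M (σ * τ) := by
    intro σ τ h1 h2 x hx
    rw [AlgEquiv.mul_apply, h2 x hx, h1 x hx]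
  let N : Submodule Fq[X] (G →ₗ[Fq[X]] Car ψ) :=
    { carrier := {φ | ∃ σ, FixesTorsion ψ M σ ∧ Rep σ φ}
      add_mem' := by
        rintro φ χ ⟨σ, h1, h2⟩ ⟨τ, h3, h4⟩
        exact ⟨σ * τ, hFmul _ _ h1 h3, hRepMul _ _ _ _ h2 h4⟩
      zero_mem' := ⟨1, fun x _ => rfl, fun a α _ => by
        rw [LinearMap.zero_apply, toK_zero]; exact (sub_self _).symm⟩
      smul_mem' := by
        rintro f φ ⟨σ, h1, h2⟩
        exact ⟨c f σ, hcH f σ h1, hRepC f σ φ h1 h2⟩ }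
  have hch : ∀ φ : N, ∃ σ, FixesTorsion ψ M σ ∧ Rep σ φ.1 := fun φ => φ.2
  choose S hS1 hS2 using hch
  let Tm : N →ₗ[Fq[X]] Car ψ :=
    { toFun := fun φ => (t (S φ) : AlgebraicClosure (RatFunc Fq))
      map_add' := by
        intro φ χ
        have : S (φ + χ) = S φ * S χ :=
          hRepInj _ _ _ (hS2 (φ + χ)) (hRepMul _ _ _ _ (hS2 φ) (hS2 χ))
        rw [this]
        exact ht2 _ _ (hS1 φ) (hS1 χ)
      map_smul' := by
        intro f φ
        have : S (f • φ) = c f (S φ) :=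
          hRepInj _ _ _ (hS2 (f • φ)) (hRepC f _ _ (hS1 φ) (hS2 φ))
        rw [this]
        exact ht3 _ _ (hS1 φ) }
  have hMfin : Finite (Fq[X] ⧸ Ideal.span {M}) := (cardA M hM0).1
  obtain ⟨a, ha⟩ := dual_surj (R := Fq[X]) (L := Car ψ)
    (fun f hf => ⟨(card_tors hψ f hf).1, (card_tors hψ f hf).2.le⟩) M N
    (by
      rintro φ ⟨σ, -, h⟩ a
      rw [map_smul]
      exact hRepTor σ φ h a)
    (by
      intro a h
      obtain ⟨γ, hγ, h1⟩ := hright (toK a.1) a.2 (by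
        intro σ hσ α hα
        obtain ⟨φ, hφ⟩ := hRepEx σ hσ
        have h2 := hφ a α hα
        rw [h φ ⟨σ, hσ, hφ⟩, toK_zero] at h2
        exact Subtype.ext (sub_eq_zero.1 h2.symm))
      exact ⟨⟨γ, hγ⟩, Subtype.ext h1⟩) Tm
  refine ⟨toK a.1, a.2, fun σ hσ α hα => ?_⟩
  obtain ⟨φ, hφ⟩ := hRepEx σ hσ
  have h1 := ha ⟨φ, σ, hσ, hφ⟩
  have h2 : S ⟨φ, σ, hσ, hφ⟩ = σ := hRepInj _ _ _ (hS2 ⟨φ, σ, hσ, hφ⟩) hφ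
  have h3 : t (S ⟨φ, σ, hσ, hφ⟩) = toK (φ a) := h1
  rw [h2] at h3
  rw [h3, hφ a α hα]
end

section
/- Suppose M is a product of distinct monic irreducible polynomials of A, so that the orders of Λ_M and G(M) = Gal(k(Λ_M)/k) are relatively prime. Then H^2(G(M), Λ_M) = 0 and H^2(G(M), H_Γ(M)) is trivial (where G(M) acts on H_Γ(M) by conjugation); in particular, the exact sequence 1 → H_Γ(M) → G_Γ(M) → G(M) → 1 splits and G_Γ(M) is a semidirect product of H_Γ(M) by G(M). -/
open Polynomial IntermediateField

set_option synthInstance.maxHeartbeats 1000000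
set_option maxHeartbeats 1000000

section CarlitzHelpers

theorem h2_aux {G V : Type*} [Group G] [Finite G] [AddCommGroup V] (act : G → V →+ V)
    (p : ℕ) (hp : ∀ x : V, p • x = 0) (hcop : Nat.Coprime (Nat.card G) p)
    (u : G → G → V)
    (hu : ∀ σ τ ρ, act σ (u τ ρ) + u σ (τ * ρ) = u σ τ + u (σ * τ) ρ) :
    ∃ v : G → V, ∀ σ τ, u σ τ = act σ (v τ) - v (σ * τ) + v σ := by
  classical
  haveI := Fintype.ofFinite G
  set m : ℤ := Nat.gcdA (Nat.card G) p with hm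
  have hb : (1 : ℤ) = (Nat.card G : ℤ) * m + p * Nat.gcdB (Nat.card G) p := by
    have := Nat.gcd_eq_gcd_ab (Nat.card G) p
    rw [hcop.gcd_eq_one] at this
    exact_mod_cast this
  refine ⟨fun σ => m • ∑ ρ, u σ ρ, fun σ τ => ?_⟩
  have key : act σ (∑ ρ, u τ ρ) + ∑ ρ, u σ ρ = Nat.card G • u σ τ + ∑ ρ, u (σ * τ) ρ := by
    have h := Finset.sum_congr (rfl : (Finset.univ : Finset G) = Finset.univ)
      (fun ρ _ => hu σ τ ρ)
    rw [Finset.sum_add_distrib, Finset.sum_add_distrib, ← map_sum,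
      Finset.sum_const, Finset.card_univ, ← Nat.card_eq_fintype_card] at h
    rw [← h]
    congr 1
    exact (Equiv.sum_comp (Equiv.mulLeft τ) (fun ρ => u σ ρ)).symm
  have h1 : u σ τ = m • (Nat.card G • u σ τ) := by
    conv_lhs => rw [← one_zsmul (u σ τ), hb, add_zsmul, mul_zsmul, mul_zsmul]
    rw [natCast_zsmul, natCast_zsmul, hp, add_zero, ← natCast_zsmul, smul_comm, natCast_zsmul]
  rw [h1, map_zsmul, eq_sub_of_add_eq key.symm, smul_sub, smul_add]
  abel

variable {Fq : Type} [Field Fq] [Fintype Fq]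
  {ψ : Polynomial Fq →+* AddMonoid.End (AlgebraicClosure (RatFunc Fq))}

local notation "kk" => RatFunc Fq
local notation "Om" => AlgebraicClosure (RatFunc Fq)

theorem psi_mul (f g : Polynomial Fq) (α : Om) : ψ (f * g) α = ψ f (ψ g α) := by
  rw [map_mul]; rfl

theorem psi_add (f g : Polynomial Fq) (α : Om) : ψ (f + g) α = ψ f α + ψ g α := by
  rw [map_add]; rfl

theorem psi_sub (f g : Polynomial Fq) (α : Om) : ψ (f - g) α = ψ f α - ψ g α := by
  rw [map_sub]; rfl

theorem psi_one (α : Om) : ψ 1 α = α := by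
  rw [map_one]; rfl

theorem psi_comm (hψ : IsCarlitz ψ) (σ : Om ≃ₐ[kk] Om) (f : Polynomial Fq) (α : Om) :
    σ (ψ f α) = ψ f (σ α) := by
  induction f using Polynomial.induction_on generalizing α with
  | C a => rw [hψ.2, hψ.2, map_mul, AlgEquiv.commutes]
  | add p q hp hq => rw [psi_add, psi_add, map_add, hp, hq]
  | monomial n a h =>
    have hX : σ (ψ X α) = ψ X (σ α) := by
      rw [hψ.1, hψ.1, map_add, map_mul, map_pow, AlgEquiv.commutes]
    rw [pow_succ, ← mul_assoc, psi_mul _ X, psi_mul _ X, h, hX]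

theorem psi_poly (hψ : IsCarlitz ψ) (d : ℕ) : ∀ f : Polynomial Fq, f ≠ 0 → f.natDegree = d →
    ∃ P : Polynomial Om, P.natDegree = Fintype.card Fq ^ d ∧ ∀ α, ψ f α = P.eval α := by
  have hq : 1 < Fintype.card Fq := Fintype.one_lt_card
  induction d with
  | zero =>
    intro f hf hd
    obtain ⟨c, rfl⟩ := Polynomial.natDegree_eq_zero.mp hd
    refine ⟨C (algebraMap kk Om (RatFunc.C c)) * X, ?_, fun α => ?_⟩
    · rw [pow_zero, Polynomial.natDegree_C_mul_X]
      have hc : c ≠ 0 := by rintro rfl; simp at hf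
      simpa using hc
    · rw [hψ.2]; simp
  | succ d ih =>
    intro f hf hd
    have hg : f.divX.natDegree = d := by rw [Polynomial.natDegree_divX_eq_natDegree_tsub_one]; omega
    have hg0 : f.divX ≠ 0 := by
      intro h
      rw [Polynomial.divX_eq_zero_iff] at h
      rw [h] at hd
      simp at hd
    obtain ⟨P, hP, hPe⟩ := ih _ hg0 hg
    refine ⟨P ^ Fintype.card Fq + (C (algebraMap kk Om RatFunc.X) * P
      + C (algebraMap kk Om (RatFunc.C (f.coeff 0))) * X), ?_, fun α => ?_⟩
    · have h1 : (P ^ Fintype.card Fq).natDegree = Fintype.card Fq ^ (d + 1) := by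
        rw [Polynomial.natDegree_pow, hP, pow_succ, mul_comm]
      rw [Polynomial.natDegree_add_eq_left_of_natDegree_lt, h1]
      rw [h1]
      refine lt_of_le_of_lt (Polynomial.natDegree_add_le _ _) (max_lt ?_ ?_)
      · refine lt_of_le_of_lt (Polynomial.natDegree_C_mul_le _ _) ?_
        rw [hP]
        exact Nat.pow_lt_pow_right hq (by omega)
      · refine lt_of_le_of_lt (Polynomial.natDegree_C_mul_le _ _) ?_
        rw [Polynomial.natDegree_X]
        exact Nat.one_lt_pow (by omega) hq
    · conv_lhs => rw [← Polynomial.divX_mul_X_add f]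
      rw [psi_add, mul_comm, psi_mul, hψ.1, hψ.2, hPe]
      simp
      ring

theorem torsion_bound (hψ : IsCarlitz ψ) (f : Polynomial Fq) (hf : f ≠ 0) :
    {x | ψ f x = 0}.Finite ∧ {x | ψ f x = 0}.ncard ≤ Fintype.card Fq ^ f.natDegree := by
  classical
  obtain ⟨P, hP, hPe⟩ := psi_poly hψ _ f hf rfl
  have hP0 : P ≠ 0 := by
    rintro rfl
    have : 0 < Fintype.card Fq ^ f.natDegree := pow_pos Fintype.card_pos _
    rw [Polynomial.natDegree_zero] at hP
    omega
  have hs : {x | ψ f x = 0} = (P.roots.toFinset : Set Om) := by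
    ext x
    simp [hP0, hPe]
  rw [hs]
  refine ⟨Finset.finite_toSet _, ?_⟩
  rw [Set.ncard_coe_finset, ← hP]
  exact (Multiset.toFinset_card_le _).trans (Polynomial.card_roots' P)

theorem psi_inj_of_coprime {P B : Polynomial Fq} (h : IsCoprime P B) {x : Om}
    (h1 : ψ P x = 0) (h2 : ψ B x = 0) : x = 0 := by
  obtain ⟨a, b, hab⟩ := h
  have := psi_one (ψ := ψ) x
  rw [← hab, psi_add, psi_mul, psi_mul, h1, h2] at this
  simpa using this.symm

theorem psi_cyclic (hψ : IsCarlitz ψ) {P : Polynomial Fq} (hP : Irreducible P) {x y : Om}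
    (hx : ψ P x = 0) (hx0 : x ≠ 0) (hy : ψ P y = 0) : ∃ B, y = ψ B x := by
  classical
  let e := Polynomial.degreeLTEquiv Fq P.natDegree
  let F : (Fin P.natDegree → Fq) → Om := fun v => ψ (e.symm v : Polynomial Fq) x
  have hF : Function.Injective F := by
    intro v w hvw
    have h0 : ψ ((e.symm (v - w) : Polynomial Fq)) x = 0 := by
      rw [map_sub, Submodule.coe_sub, psi_sub]
      exact sub_eq_zero.mpr hvw
    by_contra hne
    have hne' : (e.symm (v - w) : Polynomial Fq) ≠ 0 := by
      intro h
      apply hne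
      rw [← sub_eq_zero]
      have h' : e.symm (v - w) = 0 := Subtype.ext h
      exact (LinearEquiv.map_eq_zero_iff e.symm).mp h'
    rcases (EuclideanDomain.dvd_or_coprime P (e.symm (v - w) : Polynomial Fq) hP) with h | h
    · have h1 := Polynomial.degree_le_of_dvd h hne'
      have h2 := Polynomial.mem_degreeLT.mp (e.symm (v - w)).2
      rw [← Polynomial.degree_eq_natDegree hP.ne_zero] at h2
      exact absurd h1 (not_le.mpr h2)
    · exact hx0 (psi_inj_of_coprime h hx h0)
  obtain ⟨hfin, hcard⟩ := torsion_bound hψ P hP.ne_zero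
  have hsub : Set.range F ⊆ {x | ψ P x = 0} := by
    rintro _ ⟨v, rfl⟩
    change ψ P (ψ _ x) = 0
    rw [← psi_mul, mul_comm, psi_mul, hx, map_zero]
  have hc : (Set.range F).ncard = Fintype.card Fq ^ P.natDegree := by
    rw [← Set.image_univ, Set.ncard_image_of_injective _ hF, Set.ncard_univ]
    simp
  have := Set.eq_of_subset_of_ncard_le hsub (by rw [hc]; exact hcard) hfin
  have hy' : y ∈ Set.range F := by rw [this]; exact hy
  obtain ⟨v, hv⟩ := hy'
  exact ⟨_, hv.symm⟩

theorem unip_irred (hψ : IsCarlitz ψ) {P : Polynomial Fq} (hP : Irreducible P)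
    (p : ℕ) [hp : Fact p.Prime] [CharP Fq p] (σ : Om ≃ₐ[kk] Om)
    (hσ : ∀ x, ψ P x = 0 → (σ ^ p) x = x) {x : Om} (hx : ψ P x = 0) : σ x = x := by
  by_cases hx0 : x = 0
  · rw [hx0, map_zero]
  have hy : ψ P (σ x) = 0 := by rw [← psi_comm hψ, hx, map_zero]
  obtain ⟨B, hB⟩ := psi_cyclic hψ hP hx hx0 hy
  have hpow : ∀ n : ℕ, (σ ^ n) x = ψ (B ^ n) x := by
    intro n
    induction n with
    | zero => simp
    | succ n ih =>
      rw [pow_succ', AlgEquiv.mul_apply, ih, psi_comm hψ, hB, ← psi_mul, ← pow_succ]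
  have h1 : ψ (B ^ p - 1) x = 0 := by
    rw [psi_sub, psi_one, ← hpow, hσ x hx, sub_self]
  rcases (EuclideanDomain.dvd_or_coprime P (B ^ p - 1) hP) with h | h
  · have h2 : B ^ p - 1 = (B - 1) ^ p := by
      rw [sub_pow_char, one_pow]
    rw [h2] at h
    obtain ⟨c, hc⟩ := hP.prime.dvd_of_dvd_pow h
    have h3 : ψ (B - 1) x = 0 := by
      rw [hc, mul_comm, psi_mul, hx, map_zero]
    rw [psi_sub, psi_one] at h3
    rw [hB]; exact sub_eq_zero.mp h3
  · exact absurd (psi_inj_of_coprime h hx h1) hx0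

theorem psi_sum_zero {ι : Type*} (t : Finset ι) (f g : ι → Polynomial Fq) (y : Om)
    (h : ∀ i ∈ t, ψ (g i) y = 0) : ψ (∑ i ∈ t, f i * g i) y = 0 := by
  classical
  induction t using Finset.induction_on with
  | empty => rw [Finset.sum_empty, map_zero]; rfl
  | insert a t ha ih =>
    rw [Finset.sum_insert ha, psi_add, psi_mul, h a (Finset.mem_insert_self _ _), map_zero,
      ih (fun i hi => h i (Finset.mem_insert_of_mem hi)), add_zero]

theorem bezout_aux [DecidableEq (Polynomial Fq)] (s : Finset (Polynomial Fq))
    (hs : ∀ p ∈ s, p.Monic ∧ Irreducible p) (hne : s.Nonempty) :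
    ∃ μ : Polynomial Fq → Polynomial Fq, ∑ i ∈ s, μ i * ∏ j ∈ s \ {i}, j = 1 := by
  refine (exists_sum_eq_one_iff_pairwise_coprime (s := fun i : Polynomial Fq => i) hne).mpr ?_
  intro a b hab
  rcases (EuclideanDomain.dvd_or_coprime (a : Polynomial Fq) b (hs a a.2).2) with h | h
  · exfalso
    apply hab
    have := ((hs a a.2).2.associated_of_dvd (hs b b.2).2 h)
    exact Subtype.ext (Polynomial.eq_of_monic_of_associated (hs a a.2).1 (hs b b.2).1 this)
  · exact h

theorem unip_sqf (hψ : IsCarlitz ψ) (s : Finset (Polynomial Fq))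
    (hs : ∀ p ∈ s, p.Monic ∧ Irreducible p) (hne : s.Nonempty)
    (p : ℕ) [hp : Fact p.Prime] [CharP Fq p] (σ : Om ≃ₐ[kk] Om)
    (hσ : ∀ x, ψ (∏ P ∈ s, P) x = 0 → (σ ^ p) x = x) {x : Om} (hx : ψ (∏ P ∈ s, P) x = 0) :
    σ x = x := by
  classical
  obtain ⟨μ, hμ⟩ := bezout_aux s hs hne
  have hz : ∀ P ∈ s, ψ (∏ j ∈ s \ {P}, j) (σ x - x) = 0 := by
    intro P hPs
    have hprod : P * (∏ j ∈ s \ {P}, j) = ∏ P ∈ s, P :=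
      (Finset.prod_eq_mul_prod_sdiff_singleton_of_mem hPs (fun j => j)).symm
    generalize (∏ j ∈ s \ {P}, j) = N at hprod ⊢
    have h1 : ψ P (ψ N x) = 0 := by
      rw [← psi_mul, hprod, hx]
    have h2 : σ (ψ N x) = ψ N x := unip_irred hψ (hs P hPs).2 p σ (fun y hy => hσ y (by
      rw [← hprod, mul_comm, psi_mul, hy, map_zero])) h1
    rw [map_sub, ← psi_comm hψ, h2, sub_self]
  have h0 := psi_sum_zero s μ _ _ hz
  rw [hμ, psi_one] at h0
  exact sub_eq_zero.mp h0

end CarlitzHelpers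

section CarlitzHelpers2

theorem h2_mul {G Q : Type*} [Group G] [Finite G] [Group Q] (H : Subgroup Q)
    (hcomm : ∀ a ∈ H, ∀ b ∈ H, a * b = b * a)
    (p : ℕ) (hp : ∀ a ∈ H, a ^ p = 1) (hcop : Nat.Coprime (Nat.card G) p)
    (act : G → Q → Q)
    (hact : ∀ σ, ∃ g : Q, ∀ τ ∈ H, act σ τ = g * τ * g⁻¹ ∧ g * τ * g⁻¹ ∈ H)
    (u : G → G → Q) (huH : ∀ σ τ, u σ τ ∈ H)
    (hu : ∀ σ τ ρ, act σ (u τ ρ) * u σ (τ * ρ) = u σ τ * u (σ * τ) ρ) :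
    ∃ v : G → Q, (∀ σ, v σ ∈ H) ∧ ∀ σ τ, u σ τ = act σ (v τ) * (v (σ * τ))⁻¹ * v σ := by
  letI : CommGroup H :=
    { (inferInstance : Group H) with
      mul_comm := fun a b => Subtype.ext (hcomm a a.2 b b.2) }
  choose g hg using hact
  let a : G → Additive H →+ Additive H := fun σ => MonoidHom.toAdditive
    { toFun := fun τ => ⟨g σ * τ * (g σ)⁻¹, (hg σ τ τ.2).2⟩
      map_one' := Subtype.ext (by simp)
      map_mul' := fun x y => Subtype.ext (by simp) }
  have ha : ∀ σ (x : H), ((a σ (Additive.ofMul x)).toMul : Q) = act σ x := fun σ x =>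
    ((hg σ x x.2).1).symm
  obtain ⟨v, hv⟩ := h2_aux a p (fun x => by
      have : (x.toMul) ^ p = 1 := Subtype.ext (hp _ x.toMul.2)
      exact this) hcop (fun σ τ => Additive.ofMul ⟨u σ τ, huH σ τ⟩) (fun σ τ ρ => by
      apply Additive.toMul.injective
      apply Subtype.ext
      have := hu σ τ ρ
      rw [(hg σ _ (huH τ ρ)).1] at this
      exact this)
  refine ⟨fun σ => (v σ).toMul, fun σ => (v σ).toMul.2, fun σ τ => ?_⟩
  have h := congrArg (fun x : Additive H => (x.toMul : Q)) (hv σ τ)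
  rw [← ha, ← div_eq_mul_inv]
  exact h

variable {F L : Type*} [Field F] [Field L] [Algebra F L]

theorem agree_adjoin (S : Set L) (f g : L ≃ₐ[F] L) (h : ∀ x ∈ S, f x = g x) {x : L}
    (hx : x ∈ adjoin F S) : f x = g x := by
  induction hx using IntermediateField.adjoin_induction with
  | mem x hx => exact h x hx
  | algebraMap x => rw [AlgEquiv.commutes, AlgEquiv.commutes]
  | add x y _ _ h1 h2 => rw [map_add, map_add, h1, h2]
  | inv x _ h1 => rw [map_inv₀, map_inv₀, h1]
  | mul x y _ _ h1 h2 => rw [map_mul, map_mul, h1, h2]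

variable [Normal F L]

theorem normal_adjoin_aux (S : Set L) (h : ∀ f : L ≃ₐ[F] L, ∀ x ∈ S, f x ∈ S) :
    Normal F (adjoin F S) := by
  rw [IntermediateField.normal_iff_forall_map_le']
  intro σ
  rw [IntermediateField.adjoin_map]
  apply IntermediateField.adjoin.mono
  rintro _ ⟨x, hx, rfl⟩
  exact h σ x hx

theorem exists_hat (E : IntermediateField F L) (g : E ≃ₐ[F] E) :
    ∃ f : L ≃ₐ[F] L, ∀ x : E, f x = (g x : L) :=
  ⟨g.liftNormal L, fun x => g.liftNormal_commutes L x⟩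

theorem exists_restr (E : IntermediateField F L) [Normal F E] (f : L ≃ₐ[F] L) :
    ∃ g : E ≃ₐ[F] E, ∀ x : E, (g x : L) = f x :=
  ⟨f.restrictNormal E, fun x => f.restrictNormal_commutes E x⟩

end CarlitzHelpers2

/-- **Remark after Corollary 2.11.**
Suppose `M` is a product of distinct monic irreducible polynomials of `A = 𝔽_q[T]` (so
that the orders of `Λ_M` and `G(M) = Gal(k(Λ_M)/k)` are relatively prime).  Then
`H²(G(M), Λ_M) = 0`, and `H²(G(M), H_Γ(M))` is trivial (where `G(M)` acts on
`H_Γ(M) = Gal(k_{M,Γ}/K)` by conjugation); in particular the exact sequence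
`1 → H_Γ(M) → G_Γ(M) → G(M) → 1` splits and `G_Γ(M) = Gal(k_{M,Γ}/k)` is a semidirect
product of `H_Γ(M)` by `G(M)`. -/
theorem carlitz_kummer_semidirect_product
    {Fq : Type} [Field Fq] [Fintype Fq]
    (ψ : Polynomial Fq →+* AddMonoid.End (AlgebraicClosure (RatFunc Fq)))
    (hψ : IsCarlitz ψ)
    (M : Polynomial Fq) (hM : 0 < M.natDegree)
    -- M is a product of distinct monic irreducible polynomials
    (hsqf : ∃ s : Finset (Polynomial Fq),
      (∀ p ∈ s, p.Monic ∧ Irreducible p) ∧ M = ∏ p ∈ s, p)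
    -- Γ : a finitely generated A-submodule of (k, +)
    (Γ : AddSubgroup (AlgebraicClosure (RatFunc Fq)))
    (hΓk : ∀ x ∈ Γ, x ∈ Set.range (algebraMap (RatFunc Fq) (AlgebraicClosure (RatFunc Fq))))
    (hΓA : ∀ (f : Polynomial Fq), ∀ x ∈ Γ, ψ f x ∈ Γ)
    (hΓfg : ∃ (n : ℕ) (a : Fin n → AlgebraicClosure (RatFunc Fq)), (∀ i, a i ∈ Γ) ∧
      ∀ x ∈ Γ, ∃ g : Fin n → Polynomial Fq, x = ∑ i, ψ (g i) (a i))
    -- K = k(Λ_M) and k_{M,Γ} = k(Λ_M, (1/M)Γ)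
    (K : IntermediateField (RatFunc Fq) (AlgebraicClosure (RatFunc Fq)))
    (hK : K = adjoin (RatFunc Fq) {x | ψ M x = 0})
    (E : IntermediateField (RatFunc Fq) (AlgebraicClosure (RatFunc Fq)))
    (hE : E = adjoin (RatFunc Fq) {x | ψ M x ∈ Γ})
    -- the conjugation action of G(M) = Gal(K/k) on H_Γ(M) ⊆ G_Γ(M) = Gal(k_{M,Γ}/k):
    -- act σ̄ τ = g τ g⁻¹ for any lift g ∈ G_Γ(M) of σ̄ ∈ G(M)
    (act : (↥K ≃ₐ[RatFunc Fq] ↥K) → (↥E ≃ₐ[RatFunc Fq] ↥E) → (↥E ≃ₐ[RatFunc Fq] ↥E))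
    (hact : ∀ (σK : ↥K ≃ₐ[RatFunc Fq] ↥K) (g : ↥E ≃ₐ[RatFunc Fq] ↥E),
      (∀ (x : AlgebraicClosure (RatFunc Fq)) (hx : x ∈ K) (hx' : x ∈ E),
        (g (⟨x, hx'⟩ : ↥E) : AlgebraicClosure (RatFunc Fq))
          = ((σK (⟨x, hx⟩ : ↥K) : AlgebraicClosure (RatFunc Fq)))) →
      ∀ τ, FixesTorsion ψ M τ → act σK τ = g * τ * g⁻¹) :
    -- (1) H²(G(M), Λ_M) = 0 : every 2-cocycle with values in Λ_M is a 2-coboundary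
    (∀ u : (↥K ≃ₐ[RatFunc Fq] ↥K) → (↥K ≃ₐ[RatFunc Fq] ↥K) → ↥K,
      (∀ σ τ, ψ M ((u σ τ : AlgebraicClosure (RatFunc Fq))) = 0) →
      (∀ σ τ ρ, σ (u τ ρ) + u σ (τ * ρ) = u σ τ + u (σ * τ) ρ) →
      ∃ v : (↥K ≃ₐ[RatFunc Fq] ↥K) → ↥K,
        (∀ σ, ψ M ((v σ : AlgebraicClosure (RatFunc Fq))) = 0) ∧
        ∀ σ τ, u σ τ = σ (v τ) - v (σ * τ) + v σ) ∧
    -- (2) H²(G(M), H_Γ(M)) is trivial for the conjugation action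
    (∀ u : (↥K ≃ₐ[RatFunc Fq] ↥K) → (↥K ≃ₐ[RatFunc Fq] ↥K) →
        (↥E ≃ₐ[RatFunc Fq] ↥E),
      (∀ σ τ, FixesTorsion ψ M (u σ τ)) →
      (∀ σ τ ρ, act σ (u τ ρ) * u σ (τ * ρ) = u σ τ * u (σ * τ) ρ) →
      ∃ v : (↥K ≃ₐ[RatFunc Fq] ↥K) → (↥E ≃ₐ[RatFunc Fq] ↥E),
        (∀ σ, FixesTorsion ψ M (v σ)) ∧
        ∀ σ τ, u σ τ = act σ (v τ) * (v (σ * τ))⁻¹ * v σ) ∧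
    -- (3) the exact sequence 1 → H_Γ(M) → G_Γ(M) → G(M) → 1 splits, exhibiting G_Γ(M)
    -- as a semidirect product of H_Γ(M) by G(M)
    (∃ s : (↥K ≃ₐ[RatFunc Fq] ↥K) →* (↥E ≃ₐ[RatFunc Fq] ↥E),
      (∀ (σK : ↥K ≃ₐ[RatFunc Fq] ↥K) (x : AlgebraicClosure (RatFunc Fq))
          (hx : x ∈ K) (hx' : x ∈ E),
        ((s σK) (⟨x, hx'⟩ : ↥E) : AlgebraicClosure (RatFunc Fq))
          = ((σK (⟨x, hx⟩ : ↥K) : AlgebraicClosure (RatFunc Fq)))) ∧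
      ∀ g : ↥E ≃ₐ[RatFunc Fq] ↥E,
        ∃! p : (↥E ≃ₐ[RatFunc Fq] ↥E) × (↥K ≃ₐ[RatFunc Fq] ↥K),
          FixesTorsion ψ M p.1 ∧ g = p.1 * s p.2) := by
  classical
  obtain ⟨p, hpc⟩ := CharP.exists Fq
  haveI hpp : Fact p.Prime := ⟨CharP.char_is_prime Fq p⟩
  haveI : CharP (RatFunc Fq) p :=
    charP_of_injective_ringHom (f := (RatFunc.C : Fq →+* RatFunc Fq)) (RingHom.injective _) p
  haveI : CharP (AlgebraicClosure (RatFunc Fq)) p :=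
    charP_of_injective_algebraMap (algebraMap (RatFunc Fq) _).injective p
  obtain ⟨S, hS, hMS⟩ := hsqf
  have hSne : S.Nonempty := by
    rw [Finset.nonempty_iff_ne_empty]
    rintro rfl
    rw [hMS, Finset.prod_empty, Polynomial.natDegree_one] at hM
    exact lt_irrefl _ hM
  have hM0 : M ≠ 0 := by
    rintro rfl
    rw [Polynomial.natDegree_zero] at hM
    exact lt_irrefl _ hM
  have hfixΓ : ∀ (f : AlgebraicClosure (RatFunc Fq) ≃ₐ[RatFunc Fq]
      AlgebraicClosure (RatFunc Fq)), ∀ x ∈ Γ, f x = x := by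
    intro f x hx
    obtain ⟨y, rfl⟩ := hΓk x hx
    exact f.commutes y
  -- torsion stable
  have htors : ∀ (f : AlgebraicClosure (RatFunc Fq) ≃ₐ[RatFunc Fq]
      AlgebraicClosure (RatFunc Fq)) (x), ψ M x = 0 → ψ M (f x) = 0 := by
    intro f x hx
    rw [← psi_comm hψ, hx, map_zero]
  have htK : ∀ x, ψ M x = 0 → x ∈ K := by
    intro x hx
    rw [hK]
    exact IntermediateField.subset_adjoin _ _ hx
  haveI hKn : Normal (RatFunc Fq) K := by
    rw [hK]
    exact normal_adjoin_aux _ htors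
  haveI hEn : Normal (RatFunc Fq) E := by
    rw [hE]
    refine normal_adjoin_aux _ (fun f x hx => ?_)
    change ψ M (f x) ∈ Γ
    rw [← psi_comm hψ, hfixΓ f _ hx]
    exact hx
  have hKE : K ≤ E := by
    rw [hK, hE]
    apply IntermediateField.adjoin.mono
    intro x hx
    change ψ M x ∈ Γ
    rw [show ψ M x = 0 from hx]
    exact Γ.zero_mem
  haveI hKfin : FiniteDimensional (RatFunc Fq) K := by
    rw [hK]
    haveI : Finite {x | ψ M x = 0} := (torsion_bound hψ M hM0).1
    exact IntermediateField.finiteDimensional_adjoin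
      (fun x _ => Algebra.IsIntegral.isIntegral x)
  have hGfin : Finite (↥K ≃ₐ[RatFunc Fq] ↥K) := inferInstance
  -- coprimality
  have hcop : Nat.Coprime (Nat.card (↥K ≃ₐ[RatFunc Fq] ↥K)) p := by
    rw [Nat.coprime_comm, Nat.Prime.coprime_iff_not_dvd hpp.out]
    intro hdvd
    obtain ⟨σ, hσ⟩ := exists_prime_orderOf_dvd_card' p hdvd
    obtain ⟨f, hf⟩ := exists_hat K σ
    have hfn : ∀ (n : ℕ) (x : K), (f ^ n) x = ((σ ^ n) x : K) := by
      intro n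
      induction n with
      | zero => intro x; rfl
      | succ n ih =>
        intro x
        rw [pow_succ, pow_succ, AlgEquiv.mul_apply, AlgEquiv.mul_apply, hf, ih]
    have h1 : ∀ x, ψ M x = 0 → f x = x := by
      intro x hx
      rw [hMS] at hx
      refine unip_sqf hψ S hS hSne p f (fun y hy => ?_) hx
      rw [← hMS] at hy
      have h2 := hfn p ⟨y, htK y hy⟩
      rw [← hσ, pow_orderOf_eq_one] at h2
      rw [← hσ]
      exact h2
    have h3 : σ = 1 := by
      ext x
      rw [← hf]
      have hx : (x : AlgebraicClosure (RatFunc Fq)) ∈ _ := hK.le x.2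
      exact agree_adjoin _ f AlgEquiv.refl (fun y hy => h1 y hy) hx
    rw [h3, orderOf_one] at hσ
    exact hpp.out.one_lt.ne hσ
  -- lifting and restricting
  have hlift : ∀ σK : ↥K ≃ₐ[RatFunc Fq] ↥K, ∃ g : ↥E ≃ₐ[RatFunc Fq] ↥E,
      ∀ (x : AlgebraicClosure (RatFunc Fq)) (hx : x ∈ K) (hx' : x ∈ E),
        (g (⟨x, hx'⟩ : ↥E) : AlgebraicClosure (RatFunc Fq))
          = ((σK (⟨x, hx⟩ : ↥K) : AlgebraicClosure (RatFunc Fq))) := by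
    intro σK
    obtain ⟨f, hf⟩ := exists_hat K σK
    obtain ⟨g, hg⟩ := exists_restr E f
    exact ⟨g, fun x hx hx' => (hg ⟨x, hx'⟩).trans (hf ⟨x, hx⟩)⟩
  have hres : ∀ g : ↥E ≃ₐ[RatFunc Fq] ↥E, ∃ σK : ↥K ≃ₐ[RatFunc Fq] ↥K,
      ∀ (x : AlgebraicClosure (RatFunc Fq)) (hx : x ∈ K) (hx' : x ∈ E),
        (g (⟨x, hx'⟩ : ↥E) : AlgebraicClosure (RatFunc Fq))
          = ((σK (⟨x, hx⟩ : ↥K) : AlgebraicClosure (RatFunc Fq))) := by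
    intro g
    obtain ⟨f, hf⟩ := exists_hat E g
    obtain ⟨σK, hg⟩ := exists_restr K f
    exact ⟨σK, fun x hx hx' => ((hg ⟨x, hx⟩).trans (hf ⟨x, hx'⟩)).symm⟩
  have hfix : ∀ τ : ↥E ≃ₐ[RatFunc Fq] ↥E, FixesTorsion ψ M τ → ∀ x : E,
      (x : AlgebraicClosure (RatFunc Fq)) ∈ K → τ x = x := by
    intro τ hτ x hx
    obtain ⟨f, hf⟩ := exists_hat E τ
    apply Subtype.ext
    rw [← hf]
    rw [hK] at hx
    refine agree_adjoin _ f AlgEquiv.refl (fun y hy => ?_) hx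
    have := hf ⟨y, hKE (htK y hy)⟩
    rw [hτ ⟨y, hKE (htK y hy)⟩ hy] at this
    exact this
  have htE : ∀ (g : ↥E ≃ₐ[RatFunc Fq] ↥E) (x : E),
      ψ M (x : AlgebraicClosure (RatFunc Fq)) = 0 →
      ψ M (g x : AlgebraicClosure (RatFunc Fq)) = 0 := by
    intro g x hx
    obtain ⟨f, hf⟩ := exists_hat E g
    rw [← hf]
    exact htors f _ hx
  let H : Subgroup (↥E ≃ₐ[RatFunc Fq] ↥E) :=
    { carrier := {τ | FixesTorsion ψ M τ}
      one_mem' := fun x _ => rfl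
      mul_mem' := fun {a b} ha hb x hx => by
        rw [AlgEquiv.mul_apply, hb x hx, ha x hx]
      inv_mem' := fun {a} ha x hx => by
        have h := ha x hx
        have h2 : a⁻¹ (a x) = x := AlgEquiv.symm_apply_apply a x
        rwa [h] at h2 }
  have hHmem : ∀ τ, τ ∈ H ↔ FixesTorsion ψ M τ := fun τ => Iff.rfl
  have hHn : ∀ (g : ↥E ≃ₐ[RatFunc Fq] ↥E), ∀ τ ∈ H, g * τ * g⁻¹ ∈ H := by
    intro g τ hτ x hx
    rw [AlgEquiv.mul_apply, AlgEquiv.mul_apply, hτ _ (htE g⁻¹ x hx)]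
    exact AlgEquiv.apply_symm_apply g x
  -- description on generators
  have hgen : ∀ τ ∈ H, ∀ x : E, ψ M (x : AlgebraicClosure (RatFunc Fq)) ∈ Γ →
      ψ M ((τ x - x : E) : AlgebraicClosure (RatFunc Fq)) = 0 := by
    intro τ hτ x hx
    obtain ⟨f, hf⟩ := exists_hat E τ
    have h1 : ((τ x - x : E) : AlgebraicClosure (RatFunc Fq)) = f x - x := by
      rw [hf]; rfl
    rw [h1, map_sub, ← psi_comm hψ, hfixΓ f _ hx, sub_self]
  have hextE : ∀ g g' : ↥E ≃ₐ[RatFunc Fq] ↥E,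
      (∀ x : E, ψ M (x : AlgebraicClosure (RatFunc Fq)) ∈ Γ → g x = g' x) → g = g' := by
    intro g g' h
    obtain ⟨f, hf⟩ := exists_hat E g
    obtain ⟨f', hf'⟩ := exists_hat E g'
    ext x
    rw [← hf, ← hf']
    have hx : (x : AlgebraicClosure (RatFunc Fq)) ∈ _ := hE.le x.2
    refine agree_adjoin _ f f' (fun y hy => ?_) hx
    have hyE : y ∈ E := by
      rw [hE]
      exact IntermediateField.subset_adjoin _ _ hy
    have h3 := hf ⟨y, hyE⟩
    rw [h ⟨y, hyE⟩ hy, ← hf'] at h3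
    exact h3
  have hHcomm : ∀ a ∈ H, ∀ b ∈ H, a * b = b * a := by
    intro a ha b hb
    apply hextE
    intro x hx
    have h1 := ha _ (hgen b hb x hx)
    have h2 := hb _ (hgen a ha x hx)
    rw [map_sub] at h1 h2
    rw [AlgEquiv.mul_apply, AlgEquiv.mul_apply]
    linear_combination h1 - h2
  have hHexp : ∀ a ∈ H, a ^ p = 1 := by
    intro a ha
    apply hextE
    intro x hx
    have h1 := ha _ (hgen a ha x hx)
    have h2 : ∀ n : ℕ, (a ^ n) x = x + (n : E) * (a x - x) := by
      intro n
      induction n with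
      | zero => simp
      | succ n ih =>
        rw [pow_succ', AlgEquiv.mul_apply, ih, map_add, map_mul, h1, map_natCast]
        push_cast
        ring
    haveI : CharP E p := charP_of_injective_algebraMap (algebraMap (RatFunc Fq) E).injective p
    rw [h2, CharP.cast_eq_zero, zero_mul, add_zero]
    rfl
  have part2 : ∀ u : (↥K ≃ₐ[RatFunc Fq] ↥K) → (↥K ≃ₐ[RatFunc Fq] ↥K) →
        (↥E ≃ₐ[RatFunc Fq] ↥E),
      (∀ σ τ, FixesTorsion ψ M (u σ τ)) →
      (∀ σ τ ρ, act σ (u τ ρ) * u σ (τ * ρ) = u σ τ * u (σ * τ) ρ) →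
      ∃ v : (↥K ≃ₐ[RatFunc Fq] ↥K) → (↥E ≃ₐ[RatFunc Fq] ↥E),
        (∀ σ, FixesTorsion ψ M (v σ)) ∧
        ∀ σ τ, u σ τ = act σ (v τ) * (v (σ * τ))⁻¹ * v σ := by
    intro u hu hcoc
    refine h2_mul H hHcomm p hHexp hcop act (fun σ => ?_) u hu hcoc
    obtain ⟨g, hg⟩ := hlift σ
    exact ⟨g, fun τ hτ => ⟨hact σ g hg τ hτ, hHn g τ hτ⟩⟩
  refine ⟨?_, part2, ?_⟩
  · intro u hu hcoc
    let V : AddSubgroup K :=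
      { carrier := {x | ψ M (x : AlgebraicClosure (RatFunc Fq)) = 0}
        zero_mem' := map_zero (ψ M)
        add_mem' := fun {a b} ha hb => by
          change ψ M ((a : AlgebraicClosure (RatFunc Fq)) + b) = 0
          rw [map_add, show ψ M (a : AlgebraicClosure (RatFunc Fq)) = 0 from ha,
            show ψ M (b : AlgebraicClosure (RatFunc Fq)) = 0 from hb, add_zero]
        neg_mem' := fun {a} ha => by
          change ψ M (-(a : AlgebraicClosure (RatFunc Fq))) = 0
          rw [map_neg, show ψ M (a : AlgebraicClosure (RatFunc Fq)) = 0 from ha, neg_zero] }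
    have hV : ∀ (σ : ↥K ≃ₐ[RatFunc Fq] ↥K), ∀ x ∈ V, σ x ∈ V := by
      intro σ x hx
      obtain ⟨f, hf⟩ := exists_hat K σ
      change ψ M (σ x : AlgebraicClosure (RatFunc Fq)) = 0
      rw [← hf]
      exact htors f _ hx
    let a : (↥K ≃ₐ[RatFunc Fq] ↥K) → V →+ V := fun σ =>
      { toFun := fun x => ⟨σ x, hV σ x x.2⟩
        map_zero' := Subtype.ext (map_zero σ)
        map_add' := fun x y => Subtype.ext (map_add σ x.1 y.1) }
    haveI : CharP K p := charP_of_injective_algebraMap (algebraMap (RatFunc Fq) K).injective p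
    obtain ⟨v, hv⟩ := h2_aux a p (fun x => Subtype.ext (by
        change p • (x : K) = 0
        rw [nsmul_eq_mul, CharP.cast_eq_zero, zero_mul])) hcop
      (fun σ τ => ⟨u σ τ, hu σ τ⟩) (fun σ τ ρ => Subtype.ext (hcoc σ τ ρ))
    exact ⟨fun σ => v σ, fun σ => (v σ).2, fun σ τ => congrArg Subtype.val (hv σ τ)⟩
  · choose s0 hs0 using hlift
    have hmemK : ∀ g : ↥E ≃ₐ[RatFunc Fq] ↥E, ∀ σ : ↥K ≃ₐ[RatFunc Fq] ↥K,
        (∀ x : K, g ⟨x, hKE x.2⟩ = ⟨σ x, hKE (σ x).2⟩) → g * (s0 σ)⁻¹ ∈ H := by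
      intro g σ hg x hx
      have hy := htE (s0 σ)⁻¹ x hx
      have h1 : s0 σ ((s0 σ)⁻¹ x) = x := AlgEquiv.apply_symm_apply _ _
      rw [AlgEquiv.mul_apply]
      generalize (s0 σ)⁻¹ x = y at hy h1
      have hyK := htK _ hy
      rw [← h1]
      apply Subtype.ext
      rw [hs0 σ y hyK y.2]
      exact congrArg Subtype.val (hg ⟨y, hyK⟩)
    have hs0' : ∀ σ (x : K), s0 σ ⟨x, hKE x.2⟩ = ⟨σ x, hKE (σ x).2⟩ := fun σ x =>
      Subtype.ext (hs0 σ x x.2 _)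
    have hu : ∀ σ τ, s0 σ * s0 τ * (s0 (σ * τ))⁻¹ ∈ H := by
      intro σ τ
      apply hmemK
      intro x
      rw [AlgEquiv.mul_apply, hs0', hs0']
      rfl
    obtain ⟨v, hvH, hv⟩ := part2 (fun σ τ => s0 σ * s0 τ * (s0 (σ * τ))⁻¹) hu (by
      intro σ τ ρ
      rw [hact σ (s0 σ) (hs0 σ) _ (hu τ ρ), mul_assoc σ τ ρ]
      group)
    have hmul : ∀ σ τ, (v (σ * τ))⁻¹ * s0 (σ * τ) = (v σ)⁻¹ * s0 σ * ((v τ)⁻¹ * s0 τ) := by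
      intro σ τ
      have h1 := hv σ τ
      have hin := hHn (s0 σ) _ (hvH τ)
      rw [hact σ (s0 σ) (hs0 σ) _ (hvH τ)] at h1
      have h2 : s0 σ * s0 τ = s0 σ * v τ * (s0 σ)⁻¹ * (v (σ * τ))⁻¹ * v σ * s0 (σ * τ) := by
        rw [← h1]; group
      have hc1 := hHcomm _ (H.mul_mem hin (H.inv_mem (hvH (σ * τ)))) _ (hvH σ)
      have hc2 := hHcomm _ hin _ (H.inv_mem (hvH (σ * τ)))
      calc (v (σ * τ))⁻¹ * s0 (σ * τ)
          = (v σ)⁻¹ * (s0 σ * v τ * (s0 σ)⁻¹)⁻¹ * (v σ * (s0 σ * v τ * (s0 σ)⁻¹ *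
              (v (σ * τ))⁻¹)) * s0 (σ * τ) := by
            have hc3 := hHcomm _ hin _ (hvH σ)
            rw [← mul_assoc (v σ), ← hc3]
            group
        _ = (v σ)⁻¹ * (s0 σ * v τ * (s0 σ)⁻¹)⁻¹ * (s0 σ * s0 τ) := by
            rw [← hc1, h2]
            simp only [mul_assoc]
        _ = _ := by group
    let s : (↥K ≃ₐ[RatFunc Fq] ↥K) →* (↥E ≃ₐ[RatFunc Fq] ↥E) :=
      MonoidHom.mk' (fun σ => (v σ)⁻¹ * s0 σ) hmul
    have hsx : ∀ σ (x : E) (hx : (x : AlgebraicClosure (RatFunc Fq)) ∈ K),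
        s σ x = ⟨σ ⟨x, hx⟩, hKE (σ _).2⟩ := by
      intro σ x hx
      change (v σ)⁻¹ (s0 σ x) = _
      rw [show s0 σ x = _ from hs0' σ ⟨x, hx⟩]
      exact hfix _ (H.inv_mem (hvH σ)) _ (σ _).2
    refine ⟨s, fun σ x hx hx' => congrArg Subtype.val (hsx σ ⟨x, hx'⟩ hx), fun g => ?_⟩
    obtain ⟨σ, hσ⟩ := hres g
    have hg0 := hmemK g σ (fun x => Subtype.ext (hσ x x.2 _))
    refine ⟨(g * (s σ)⁻¹, σ), ⟨?_, ?_⟩, ?_⟩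
    · have h1 : g * (s σ)⁻¹ = g * (s0 σ)⁻¹ * v σ := by
        change g * ((v σ)⁻¹ * s0 σ)⁻¹ = _
        group
      change g * (s σ)⁻¹ ∈ H
      rw [h1]
      exact H.mul_mem hg0 (hvH σ)
    · simp
    · rintro ⟨h, σ'⟩ ⟨hh, hgh⟩
      simp only [] at hh hgh
      have hσσ : σ' = σ := by
        ext x
        rw [← hσ x x.2 (hKE x.2), hgh, AlgEquiv.mul_apply, hsx σ' ⟨x, hKE x.2⟩ x.2,
          hfix h hh _ (σ' _).2]
      subst hσσ
      rw [hgh, mul_inv_cancel_right]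
end
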